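/- A matroid M of rank k on [n] is a positroid if and only if every two-dimensional face of its matroid polytope Γ_M is a positroid polytope. Moreover, if M is not a positroid, then Γ_M has a two-dimensional face with vertex set {e_{Sab}, e_{Sad}, e_{Sbc}, e_{Scd}} for some 1 ≤ a < b < c < d ≤ n and some (k−2)-set S disjoint from {a,b,c,d}. -/

import Mathlib

open scoped BigOperators

/-- The indicator vector `e_B ∈ ℝⁿ` of a subset `B ⊆ [n]`. -/
noncomputable def ind (n : ℕ) (B : Finset (Fin n)) : Fin n → ℝ :=
  fun i => if i ∈ B then 1 else 0

/-- The matroid polytope `conv{e_B : B ∈ 𝓑}`. -/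
noncomputable def polytopeOf (n : ℕ) (𝓑 : Finset (Finset (Fin n))) : Set (Fin n → ℝ) :=
  convexHull ℝ (ind n '' ↑𝓑)

/-- `F` is a face of `P`: the set of maximizers in `P` of some linear functional. -/
def IsFaceOf (n : ℕ) (P F : Set (Fin n → ℝ)) : Prop :=
  ∃ w : Fin n → ℝ, F = {x ∈ P | ∀ y ∈ P, ∑ i, w i * y i ≤ ∑ i, w i * x i}

/-- The basis exchange axiom. -/
def ExchangeAxiom (n : ℕ) (𝓑 : Finset (Finset (Fin n))) : Prop :=
  ∀ B₁ ∈ 𝓑, ∀ B₂ ∈ 𝓑, ∀ x ∈ B₁ \ B₂, ∃ y ∈ B₂ \ B₁, insert y (B₁.erase x) ∈ 𝓑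

/-- The maximal minor of a `k × n` matrix with column set `I` (zero if `|I| ≠ k`). -/
noncomputable def minor (k n : ℕ) (A : Matrix (Fin k) (Fin n) ℝ) (I : Finset (Fin n)) : ℝ :=
  if h : I.card = k then (A.submatrix id fun j : Fin k => ((I.orderIsoOfFin h j : I) : Fin n)).det
  else 0

/-- `𝓑` is the set of bases of a positroid of rank `k` on `[n]`. -/
def IsPositroid (n k : ℕ) (𝓑 : Set (Finset (Fin n))) : Prop :=
  ∃ A : Matrix (Fin k) (Fin n) ℝ, A.rank = k ∧
    (∀ I : Finset (Fin n), 0 ≤ minor k n A I) ∧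
    (∀ I : Finset (Fin n), I.card = k → (I ∈ 𝓑 ↔ minor k n A I ≠ 0))

/-!
The maximal minors of a matrix satisfy `Δ_{Sac} Δ_{Sbd} = Δ_{Sab} Δ_{Scd} + Δ_{Sad} Δ_{Sbc}` for
`a < b < c < d`, so the matroid of a totally nonnegative matrix is crossing closed: if `Sab`, `Sad`,
`Sbc` and `Scd` are bases, then so are `Sac` and `Sbd`. Conversely, every crossing closed matroid
`M` is a positroid. Indeed, if a set `B` of the right size is not a base, choose `F` with
`r(F) < |B ∩ F|` having as few boundary positions as possible. If `F` were not a cyclic interval,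
cutting `F` and its complement into cyclically separated parts would give a basis exchange `a ↔ c`
in `M|F` and another one `b ↔ d` in `M/F` (or the other way round) with `a < b < c < d`,
contradicting crossing closedness. Hence a crossing closed matroid is determined by the ranks of
the cyclic intervals, which are encoded in a bounded affine permutation. Every bounded affine
permutation is realized by a totally nonnegative matrix, built up from a coordinate matrix by
adding multiples of columns to later ones (bridges).

Being crossing closed passes to faces because the weights of `Sac` and `Sbd` have the same sum as
those of `Sab` and `Scd`. If it fails with `Sac` not a base, the functional
`e_{Sabcd} + e_{Sac} + e_S` cuts out the square face with vertices `Sab`, `Sad`, `Sbc`, `Scd`, which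
is not a positroid polytope; if `Sbd` is not a base, rotate `a, b, c, d`.
-/

section Matroid

open Set
open scoped Matroid

variable {α : Type*} {M : Matroid α} {a c : α} {B F K Q X Y : Set α}

/-- `a` and `c` are exchangeable in `M` when some base containing `a` but not `c` remains a base
after replacing `a` by `c`. For `a ≠ c` this says that they lie on a common circuit. -/
def Exchangeable (M : Matroid α) (a c : α) : Prop :=
  ∃ K, a ∉ K ∧ c ∉ K ∧ M.IsBase (insert a K) ∧ M.IsBase (insert c K)

theorem Exchangeable.symm : Exchangeable M a c → Exchangeable M c a
  | ⟨K, ha, hc, hKa, hKc⟩ => ⟨K, hc, ha, hKc, hKa⟩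

theorem Exchangeable.dual (h : Exchangeable M a c) (hne : a ≠ c) : Exchangeable M✶ a c := by
  obtain ⟨K, ha, hc, hKa, hKc⟩ := h
  refine ⟨M.E \ insert a (insert c K), by simp, by simp, ?_, ?_⟩
  · convert hKc.compl_isBase_dual using 1
    have := hKa.subset_ground (mem_insert a K)
    grind
  · convert hKa.compl_isBase_dual using 1
    have := hKc.subset_ground (mem_insert c K)
    grind

theorem exists_exchangeable_of_eRank_lt (hXY : X ∪ Y = M.E) (hdisj : Disjoint X Y)
    (h : M.eRank < M.eRk X + M.eRk Y) : ∃ a ∈ X, ∃ c ∈ Y, Exchangeable M a c := by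
  obtain ⟨I, hI⟩ := M.exists_isBasis X (hXY ▸ subset_union_left)
  obtain ⟨J, hJ, rfl⟩ := hI.exists_isBase
  have hY : ¬ Y ⊆ M.closure (J \ X) := fun hY ↦ h.not_ge <| by
    calc M.eRk X + M.eRk Y ≤ (J ∩ X).encard + (J \ X).encard := by
          rw [hI.encard_eq_eRk]
          gcongr
          exact (M.eRk_mono hY).trans ((M.eRk_closure_eq _).trans_le (M.eRk_le_encard _))
      _ = M.eRank := by rw [← hJ.encard_eq_eRank, add_comm, encard_sdiff_add_encard_inter]
  obtain ⟨c, hcY, hcl⟩ := not_subset.1 hY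
  have hcE : c ∈ M.E := hXY ▸ Or.inr hcY
  have hcJ : c ∉ J := fun hcJ ↦ hcl <| M.mem_closure_of_mem'
    ⟨hcJ, fun hcX ↦ disjoint_left.1 hdisj hcX hcY⟩ hcE
  have hC := hJ.fundCircuit_isCircuit hcE hcJ
  obtain ⟨a, haC, ha⟩ : ∃ a ∈ M.fundCircuit c J \ {c}, a ∉ J \ X := by
    by_contra! hsub
    exact hcl (M.closure_subset_closure hsub
      (hC.mem_closure_sdiff_singleton_of_mem (M.mem_fundCircuit c J)))
  have haJ : a ∈ J := (M.fundCircuit_subset_insert c J haC.1).resolve_left haC.2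
  refine ⟨a, by_contra fun haX ↦ ha ⟨haJ, haX⟩, c, hcY, J \ {a}, by simp,
    fun hc ↦ hcJ hc.1, by rwa [insert_sdiff_singleton, insert_eq_of_mem haJ], ?_⟩
  rw [insert_sdiff_singleton_comm (Ne.symm haC.2)]
  exact hJ.exchange_isBase_of_indep' haJ hcJ
    ((hJ.indep.mem_fundCircuit_iff (hJ.closure_eq ▸ hcE) hcJ).1 haC.1)

theorem exists_symm_exchange {B₁ B₂ : Set α} {x : α} (h₁ : M.IsBase B₁)
    (h₂ : M.IsBase B₂) (hx : x ∈ B₁ \ B₂) :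
    ∃ y ∈ B₂ \ B₁, M.IsBase (insert y (B₁ \ {x})) ∧ M.IsBase (insert x (B₂ \ {y})) := by
  have hxE := h₁.subset_ground hx.1
  have hC := h₂.fundCircuit_isCircuit hxE hx.2
  obtain ⟨y, ⟨hyC, hyx⟩, hycl⟩ :
      ∃ y ∈ M.fundCircuit x B₂ \ {x}, y ∉ M.closure (B₁ \ {x}) := by
    by_contra! hsub
    exact h₁.indep.notMem_closure_sdiff_of_mem hx.1
      (M.closure_subset_closure_of_subset_closure hsub
        (hC.mem_closure_sdiff_singleton_of_mem (M.mem_fundCircuit x B₂)))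
  have hy₂ := (M.fundCircuit_subset_insert x B₂ hyC).resolve_left hyx
  have hy₁ : y ∉ B₁ := fun hy ↦ hycl (M.mem_closure_of_mem' ⟨hy, hyx⟩ (h₂.subset_ground hy₂))
  refine ⟨y, ⟨hy₂, hy₁⟩,
    h₁.exchange_base_of_notMem_closure hx.1 hycl (h₂.subset_ground hy₂), ?_⟩
  rw [insert_sdiff_singleton_comm (Ne.symm hyx)]
  exact h₂.exchange_isBase_of_indep' hy₂ hx.2
    ((h₂.indep.mem_fundCircuit_iff (h₂.closure_eq ▸ hxE) hx.2).1 hyC)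

theorem isBase_union_of_isBasis_of_isBase_contract (hK : M.IsBasis K F)
    (hQ : (M ／ F).IsBase Q) : M.IsBase (K ∪ Q) := by
  rw [Matroid.isBase_iff_indep_closure_eq, union_comm]
  refine ⟨(hK.contract_indep_iff.1 hQ.indep).1, ?_⟩
  rw [← M.closure_union_congr_right hK.closure_eq_closure.symm]
  exact ((Matroid.contract_spanning_iff hK.subset_ground).1 hQ.spanning).1.closure_eq

theorem encard_sdiff_eq_eRank_dual [Finite α] (hB : B ⊆ M.E) (hcard : B.encard = M.eRank) :
    (M.E \ B).encard = M✶.eRank := by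
  have := encard_sdiff_add_encard_of_subset hB
  rw [← M.eRank_add_eRank_dual, ← hcard, add_comm] at this
  exact WithTop.add_left_cancel B.toFinite.encard_lt_top.ne this

/-- `B` violates the rank inequality of `M` at `F`. Bases violate none of them, and every other
set of the right size violates one. -/
def Violates (M : Matroid α) (B F : Set α) : Prop :=
  M.eRk F < (B ∩ F).encard

theorem Violates.dual [Finite α] (hB : B ⊆ M.E) (hF : F ⊆ M.E) (hcard : B.encard = M.eRank)
    (h : Violates M B F) : Violates M✶ (M.E \ B) (M.E \ F) := by
  have hrk := M.eRk_dual_add_eRank (M.E \ F)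
  have hBF := encard_sdiff_add_encard_inter B F
  have hEF := encard_sdiff_add_encard_inter (M.E \ F) B
  rw [show (M.E \ F) \ B = M.E \ B ∩ (M.E \ F) by grind,
    show M.E \ F ∩ B = B \ F by grind] at hEF
  rw [sdiff_sdiff_cancel_left hF, ← hcard, ← hBF, ← hEF] at hrk
  have htop (X : Set α) : X.encard ≠ ⊤ := X.toFinite.encard_lt_top.ne
  unfold Violates at h ⊢
  by_contra! hle
  have := (M✶.eRk_le_encard (M.E \ F)).trans_lt (M.E \ F).toFinite.encard_lt_top
  lift M✶.eRk (M.E \ F) to ℕ using this.ne with r'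
  lift M.eRk F to ℕ using (h.trans_le le_top).ne with r
  lift (B ∩ F).encard to ℕ using htop _ with x
  lift (B \ F).encard to ℕ using htop _ with y
  lift (M.E \ B ∩ (M.E \ F)).encard to ℕ using htop _ with z
  norm_cast at *
  omega

theorem Violates.exists_exchangeable (h : Violates M B F) (hXF : X ⊆ F)
    (hX : ¬ Violates M B X) (hY : ¬ Violates M B (F \ X)) :
    ∃ a ∈ X, ∃ c ∈ F \ X, Exchangeable (M ↾ F) a c := by
  refine exists_exchangeable_of_eRank_lt (by simpa using hXF) disjoint_sdiff_right ?_
  rw [Matroid.eRank_restrict, M.restrict_eRk_eq hXF, M.restrict_eRk_eq sdiff_subset]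
  calc M.eRk F < (B ∩ F).encard := h
    _ = (B ∩ F ∩ X).encard + ((B ∩ F) \ X).encard := by
        rw [add_comm, encard_sdiff_add_encard_inter]
    _ = (B ∩ X).encard + (B ∩ (F \ X)).encard := by
        rw [inter_assoc, inter_eq_self_of_subset_right hXF, inter_sdiff_assoc]
    _ ≤ M.eRk X + M.eRk (F \ X) := add_le_add (not_lt.1 hX) (not_lt.1 hY)

end Matroid

section CyclicInterval

open Set

variable {α : Type*} [LinearOrder α] {F : Set α} {u v : α}

/-- A cyclic interval of a linear order regarded as a cycle: an interval or the complement of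
one. -/
def IsCyclicInterval (F : Set α) : Prop :=
  F.OrdConnected ∨ Fᶜ.OrdConnected

theorem exists_mem_lt_notMem_lt_mem_of_not_ordConnected (h : ¬ F.OrdConnected) :
    ∃ x ∈ F, ∃ y ∉ F, ∃ z ∈ F, x < y ∧ y < z := by
  simp only [ordConnected_iff, not_forall, not_subset] at h
  obtain ⟨x, hx, z, hz, -, y, hy, hyF⟩ := h
  exact ⟨x, hx, y, hyF, z, hz, hy.1.lt_of_ne (by grind), hy.2.lt_of_ne (by grind)⟩

theorem exists_alternating_of_not_isCyclicInterval (h : ¬ IsCyclicInterval F) :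
    ∃ w x y z, w < x ∧ x < y ∧ y < z ∧
      (w ∉ F ∧ x ∈ F ∧ y ∉ F ∧ z ∈ F ∨ w ∈ F ∧ x ∉ F ∧ y ∈ F ∧ z ∉ F) := by
  rw [IsCyclicInterval, not_or] at h
  obtain ⟨x, hx, y, hy, z, hz, hxy, hyz⟩ := exists_mem_lt_notMem_lt_mem_of_not_ordConnected h.1
  obtain ⟨x', hx', y', hy', z', hz', hxy', hyz'⟩ :=
    exists_mem_lt_notMem_lt_mem_of_not_ordConnected h.2
  rw [notMem_compl_iff] at hy'
  obtain hlt | rfl | hlt := lt_trichotomy x x'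
  · exact ⟨x, x', y', z', hlt, hxy', hyz', Or.inr ⟨hx, hx', hy', hz'⟩⟩
  · exact absurd hx hx'
  · exact ⟨x', x, y, z, hlt, hxy, hyz, Or.inl ⟨hx', hx, hy, hz⟩⟩

variable [SuccOrder α]

/-- The positions after which membership in `F` changes. The number of them measures the
complexity of `F` in the descent to cyclic intervals. -/
def boundary (F : Set α) : Set α :=
  {i | ¬ (i ∈ F ↔ Order.succ i ∈ F)}

theorem boundary_compl (F : Set α) : boundary Fᶜ = boundary F := by
  ext i
  simp only [boundary, mem_ofPred_eq, mem_compl_iff, not_iff_not]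

theorem boundary_inter_Ioo (hu : u ∉ F) (hv : v ∉ F) :
    boundary (F ∩ Ioo u v) = boundary F ∩ Ico u v := by
  ext i
  have hiv : i < v → Order.succ i ≤ v := Order.succ_le_of_lt
  have hiu : i < u → Order.succ i ≤ u := Order.succ_le_of_lt
  have hui : i < v → i < Order.succ i := fun h ↦ Order.lt_succ_of_not_isMax h.not_isMax
  have hle := Order.le_succ i
  simp only [boundary, mem_ofPred_eq, mem_inter_iff, mem_Ioo, mem_Ico]
  grind

theorem boundary_sdiff_Ioo (hu : u ∉ F) (hv : v ∉ F) :
    boundary (F \ Ioo u v) = boundary F \ Ico u v := by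
  ext i
  have hiv : i < v → Order.succ i ≤ v := Order.succ_le_of_lt
  have hiu : i < u → Order.succ i ≤ u := Order.succ_le_of_lt
  have hui : i < v → i < Order.succ i := fun h ↦ Order.lt_succ_of_not_isMax h.not_isMax
  have hle := Order.le_succ i
  simp only [boundary, mem_ofPred_eq, mem_sdiff, mem_Ioo, mem_Ico]
  grind

theorem exists_mem_boundary_mem_Ico [IsSuccArchimedean α] (huv : u < v)
    (h : ¬ (u ∈ F ↔ v ∈ F)) : ∃ i ∈ boundary F, i ∈ Ico u v := by
  by_contra! hne
  have hgen := reflTransGen_of_succ_of_le (fun x y ↦ (x ∈ F ↔ y ∈ F))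
    (fun i hi ↦ not_not.1 fun hiF ↦ hne i hiF hi) huv.le
  rw [Relation.reflTransGen_eq_self (r := fun x y ↦ (x ∈ F ↔ y ∈ F))] at hgen
  exact h hgen

/-- Whenever `F` is split into two parts with fewer boundary positions than `F`, the relation `R`
holds between elements of the two parts. -/
def LinksSplits (R : α → α → Prop) (F : Set α) : Prop :=
  ∀ X ⊆ F, (boundary X).ncard < (boundary F).ncard → (boundary (F \ X)).ncard < (boundary F).ncard →
    ∃ a ∈ X, ∃ c ∈ F \ X, R a c

variable [IsSuccArchimedean α] [Finite α] {R R' : α → α → Prop}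

theorem LinksSplits.exists_mem_Ioo_notMem_Icc (hR : LinksSplits R F) (hu : u ∉ F) (hv : v ∉ F)
    (hin : (F ∩ Ioo u v).Nonempty) (hout : (F \ Icc u v).Nonempty) :
    ∃ a ∈ F ∩ Ioo u v, ∃ c ∈ F \ Icc u v, R a c := by
  obtain ⟨p, hpF, hp⟩ := hin
  obtain ⟨q, hqF, hq⟩ := hout
  obtain ⟨i, hiF, hi⟩ := exists_mem_boundary_mem_Ico hp.1 (F := F) (by tauto)
  obtain ⟨j, hjF, hj⟩ : ∃ j ∈ boundary F, j ∉ Ico u v := by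
    obtain hlt | hlt : q < u ∨ v < q := by grind
    · obtain ⟨j, hjF, hj⟩ := exists_mem_boundary_mem_Ico hlt (F := F) (by tauto)
      exact ⟨j, hjF, fun h ↦ hj.2.not_ge h.1⟩
    · obtain ⟨j, hjF, hj⟩ := exists_mem_boundary_mem_Ico hlt (F := F) (by tauto)
      exact ⟨j, hjF, fun h ↦ hj.1.not_gt h.2⟩
  obtain ⟨a, ha, c, hc, hac⟩ := hR (F ∩ Ioo u v) inter_subset_left
    (by
      rw [boundary_inter_Ioo hu hv]
      exact ncard_lt_ncard ⟨inter_subset_left, fun h ↦ hj (h hjF).2⟩)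
    (by
      rw [sdiff_self_inter, boundary_sdiff_Ioo hu hv]
      exact ncard_lt_ncard ⟨sdiff_subset, fun h ↦ (h hiF).2 ⟨hi.1, hi.2.trans hp.2⟩⟩)
  exact ⟨a, ha, c, by grind, hac⟩

theorem exists_crossing_of_alternating (hR : LinksSplits R F) (hR' : LinksSplits R' Fᶜ)
    (hsymm : ∀ ⦃a c⦄, R a c → R c a) (hsymm' : ∀ ⦃a c⦄, R' a c → R' c a)
    {w x y z : α} (hwx : w < x) (hxy : x < y) (hyz : y < z) (hw : w ∉ F) (hx : x ∈ F) (hy : y ∉ F)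
    (hz : z ∈ F) :
    ∃ a b c d, a < b ∧ b < c ∧ c < d ∧ (R a c ∧ R' b d ∨ R' a c ∧ R b d) := by
  obtain ⟨a, ⟨haF, ha⟩, c, ⟨hcF, hc⟩, hac⟩ := hR.exists_mem_Ioo_notMem_Icc hw hy
    ⟨x, hx, hwx, hxy⟩ ⟨z, hz, fun h ↦ h.2.not_gt hyz⟩
  rw [mem_Icc, not_and_or, not_le, not_le] at hc
  obtain hcw | hyc := hc
  · obtain ⟨b, ⟨-, hb⟩, d, ⟨-, hd⟩, hbd⟩ := hR'.exists_mem_Ioo_notMem_Icc (u := c) (v := a)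
      (not_not.2 hcF) (not_not.2 haF) ⟨w, hw, hcw, ha.1⟩ ⟨y, hy, fun h ↦ h.2.not_gt ha.2⟩
    rw [mem_Icc, not_and_or, not_le, not_le] at hd
    obtain hdc | had := hd
    · exact ⟨d, c, b, a, hdc, hb.1, hb.2, Or.inr ⟨hsymm' hbd, hsymm hac⟩⟩
    · exact ⟨c, b, a, d, hb.1, hb.2, had, Or.inl ⟨hsymm hac, hbd⟩⟩
  · obtain ⟨b, ⟨-, hb⟩, d, ⟨-, hd⟩, hbd⟩ := hR'.exists_mem_Ioo_notMem_Icc (u := a) (v := c)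
      (not_not.2 haF) (not_not.2 hcF) ⟨y, hy, ha.2, hyc⟩ ⟨w, hw, fun h ↦ h.1.not_gt ha.1⟩
    rw [mem_Icc, not_and_or, not_le, not_le] at hd
    obtain hda | hcd := hd
    · exact ⟨d, a, b, c, hda, hb.1, hb.2, Or.inr ⟨hsymm' hbd, hac⟩⟩
    · exact ⟨a, b, c, d, hb.1, hb.2, hcd, Or.inl ⟨hac, hbd⟩⟩

theorem exists_crossing_of_not_isCyclicInterval (h : ¬ IsCyclicInterval F)
    (hR : LinksSplits R F) (hR' : LinksSplits R' Fᶜ)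
    (hsymm : ∀ ⦃a c⦄, R a c → R c a) (hsymm' : ∀ ⦃a c⦄, R' a c → R' c a) :
    ∃ a b c d, a < b ∧ b < c ∧ c < d ∧ (R a c ∧ R' b d ∨ R' a c ∧ R b d) := by
  obtain ⟨w, x, y, z, hwx, hxy, hyz, ⟨hw, hx, hy, hz⟩ | ⟨hw, hx, hy, hz⟩⟩ :=
    exists_alternating_of_not_isCyclicInterval h
  · exact exists_crossing_of_alternating hR hR' hsymm hsymm' hwx hxy hyz hw hx hy hz
  · obtain ⟨a, b, c, d, hab, hbc, hcd, h⟩ := exists_crossing_of_alternating hR'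
      (by rwa [compl_compl]) hsymm' hsymm hwx hxy hyz (not_not.2 hw) hx (not_not.2 hy) hz
    exact ⟨a, b, c, d, hab, hbc, hcd, h.symm⟩

end CyclicInterval

section CrossingClosed

open Set
open scoped Matroid

variable {α : Type*} {M : Matroid α} {a b c d : α} {B F : Set α}

theorem exists_isBase_insert_of_exchangeable (hac : Exchangeable (M ↾ F) a c) (hne : a ≠ c)
    (hbd : Exchangeable (M ／ F) b d) (hF : F ⊆ M.E) :
    ∃ S, a ∉ S ∧ b ∉ S ∧ c ∉ S ∧ d ∉ S ∧ M.IsBase (insert a (insert b S)) ∧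
      M.IsBase (insert a (insert d S)) ∧ M.IsBase (insert c (insert b S)) ∧
      M.IsBase (insert c (insert d S)) ∧ ¬ M.IsBase (insert a (insert c S)) := by
  obtain ⟨K, ha, hc, hKa, hKc⟩ := hac
  obtain ⟨Q, hb, hd, hQb, hQd⟩ := hbd
  rw [Matroid.isBase_restrict_iff hF] at hKa hKc
  have hbase {x y : α} (hx : M.IsBasis (insert x K) F) (hy : (M ／ F).IsBase (insert y Q)) :
      M.IsBase (insert x (insert y (K ∪ Q))) := by
    have := isBase_union_of_isBasis_of_isBase_contract hx hy
    rwa [insert_union, union_insert] at this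
  have hQ {x : α} (hx : x ∈ F) : x ∉ Q := fun hxQ ↦
    (hQb.subset_ground (mem_insert_of_mem b hxQ)).2 hx
  have hK {x : α} (hx : x ∈ M.E \ F) : x ∉ K := fun hxK ↦
    hx.2 (hKa.subset (mem_insert_of_mem a hxK))
  have haF := hKa.subset (mem_insert a K)
  have hcF := hKc.subset (mem_insert c K)
  have hbF := hQb.subset_ground (mem_insert b Q)
  have hdF := hQd.subset_ground (mem_insert d Q)
  refine ⟨K ∪ Q, by simp [ha, hQ haF], by simp [hb, hK hbF], by simp [hc, hQ hcF],
    by simp [hd, hK hdF], hbase hKa hQb, hbase hKa hQd, hbase hKc hQb, hbase hKc hQd, fun h ↦ ?_⟩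
  have heq := hKa.eq_of_subset_indep (J := insert a (insert c K)) (h.indep.subset (by grind))
    (by grind) (insert_subset haF (insert_subset hcF fun x hx ↦
      hKa.subset (mem_insert_of_mem a hx)))
  have : c ∈ insert a K := heq ▸ (by simp)
  grind

/-- Crossing closedness of a matroid on a linearly ordered ground set: for `a < b < c < d` outside
`S`, if `Sab`, `Sad`, `Sbc` and `Scd` are bases, then so are `Sac` and `Sbd`. -/
def CrossingClosed [LinearOrder α] (M : Matroid α) : Prop :=
  ∀ ⦃S : Set α⦄ ⦃a b c d : α⦄, a < b → b < c → c < d → a ∉ S → b ∉ S → c ∉ S → d ∉ S →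
    M.IsBase (insert a (insert b S)) → M.IsBase (insert a (insert d S)) →
    M.IsBase (insert b (insert c S)) → M.IsBase (insert c (insert d S)) →
    M.IsBase (insert a (insert c S)) ∧ M.IsBase (insert b (insert d S))

theorem CrossingClosed.not_exchangeable [LinearOrder α] (hM : CrossingClosed M) (hF : F ⊆ M.E)
    (hab : a < b) (hbc : b < c) (hcd : c < d) :
    ¬ (Exchangeable (M ↾ F) a c ∧ Exchangeable (M ／ F) b d ∨
      Exchangeable (M ／ F) a c ∧ Exchangeable (M ↾ F) b d) := by
  rintro (⟨hR, hC⟩ | ⟨hC, hR⟩)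
  · obtain ⟨S, ha, hb, hc, hd, hSab, hSad, hScb, hScd, hSac⟩ :=
      exists_isBase_insert_of_exchangeable hR (hab.trans hbc).ne hC hF
    rw [insert_comm] at hScb
    exact hSac (hM hab hbc hcd ha hb hc hd hSab hSad hScb hScd).1
  · obtain ⟨S, hb, ha, hd, hc, hSba, hSbc, hSda, hSdc, hSbd⟩ :=
      exists_isBase_insert_of_exchangeable hR (hbc.trans hcd).ne hC hF
    rw [insert_comm] at hSba hSda hSdc
    exact hSbd (hM hab hbc hcd ha hb hc hd hSba hSda hSbc hSdc).2

variable [LinearOrder α] [SuccOrder α]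

theorem Violates.linksSplits (h : Violates M B F)
    (hmin : ∀ G, Violates M B G → (boundary F).ncard ≤ (boundary G).ncard) :
    LinksSplits (Exchangeable (M ↾ F)) F :=
  fun _ hXF hX hX' ↦ h.exists_exchangeable hXF (fun hV ↦ (hmin _ hV).not_gt hX)
    (fun hV ↦ (hmin _ hV).not_gt hX')

variable [Finite α]

theorem Violates.linksSplits_compl (h : Violates M B F) (hE : M.E = univ)
    (hB : B.encard = M.eRank)
    (hmin : ∀ G, Violates M B G → (boundary F).ncard ≤ (boundary G).ncard) :
    LinksSplits (Exchangeable (M ／ F)) Fᶜ := by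
  have hdual := h.dual (by simp [hE]) (by simp [hE]) hB
  rw [hE, ← compl_eq_univ_sdiff, ← compl_eq_univ_sdiff] at hdual
  have hcompl {Y : Set α} (hY : (boundary Y).ncard < (boundary Fᶜ).ncard) :
      ¬ Violates M✶ Bᶜ Y := fun hV ↦ by
    have hV' := hV.dual (by simp [hE]) (by simp [hE])
      (by rw [compl_eq_univ_sdiff, ← hE]; exact encard_sdiff_eq_eRank_dual (by simp [hE]) hB)
    rw [Matroid.dual_ground, hE, ← compl_eq_univ_sdiff, ← compl_eq_univ_sdiff, compl_compl,
      Matroid.dual_dual] at hV'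
    have := hmin _ hV'
    rw [boundary_compl] at this hY
    exact this.not_gt hY
  intro Y hYF hY hY'
  obtain ⟨b, hb, d, hd, hbd⟩ := hdual.exists_exchangeable hYF (hcompl hY) (hcompl hY')
  have hne : b ≠ d := fun hbd ↦ hd.2 (hbd ▸ hb)
  have := hbd.dual hne
  rw [compl_eq_univ_sdiff, ← hE, ← Matroid.dual_ground, ← Matroid.delete_eq_restrict,
    Matroid.dual_delete_dual] at this
  exact ⟨b, hb, d, hd, this⟩

theorem CrossingClosed.exists_isCyclicInterval_violates [IsSuccArchimedean α]
    (hM : CrossingClosed M) (hE : M.E = univ) (hB : B.encard = M.eRank) (hB' : ¬ M.IsBase B) :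
    ∃ F, IsCyclicInterval F ∧ Violates M B F := by
  have hBB : Violates M B B := by
    rw [Violates, inter_self]
    refine (M.eRk_le_encard B).lt_of_ne fun h ↦ hB' ?_
    have hind := (Matroid.indep_iff_eRk_eq_encard_of_finite B.toFinite).2 h
    exact hind.isBase_of_eRk_ge B.toFinite (h.trans hB).ge
  obtain ⟨F, hF, hmin⟩ := {F | Violates M B F}.toFinite.exists_minimalFor
    (fun F ↦ (boundary F).ncard) _ ⟨B, hBB⟩
  replace hmin G (hG : Violates M B G) : (boundary F).ncard ≤ (boundary G).ncard :=
    (le_total _ _).elim id (hmin hG)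
  refine ⟨F, by_contra fun hcyc ↦ ?_, hF⟩
  obtain ⟨a, b, c, d, hab, hbc, hcd, h⟩ := exists_crossing_of_not_isCyclicInterval hcyc
    (hF.linksSplits hmin) (hF.linksSplits_compl hE hB hmin) (fun _ _ ↦ Exchangeable.symm)
    (fun _ _ ↦ Exchangeable.symm)
  exact hM.not_exchangeable (by simp [hE]) hab hbc hcd h

theorem CrossingClosed.eq_of_eRk_eq [IsSuccArchimedean α] {N : Matroid α}
    (hM : CrossingClosed M) (hN : CrossingClosed N) (hME : M.E = univ) (hNE : N.E = univ)
    (h : ∀ F, IsCyclicInterval F → M.eRk F = N.eRk F) : M = N := by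
  have hrank : M.eRank = N.eRank := by
    rw [← M.eRk_univ_eq, ← N.eRk_univ_eq, h univ (Or.inl ordConnected_univ)]
  have hbase {M N : Matroid α} (hN : CrossingClosed N) (hNE : N.E = univ)
      (h : ∀ F, IsCyclicInterval F → M.eRk F = N.eRk F) (hrank : M.eRank = N.eRank) {B : Set α}
      (hB : M.IsBase B) : N.IsBase B := by
    by_contra hNB
    obtain ⟨F, hF, hV⟩ := hN.exists_isCyclicInterval_violates hNE
      (hB.encard_eq_eRank.trans hrank) hNB
    rw [Violates, ← h F hF] at hV
    exact hV.not_ge ((hB.indep.inter_right F).encard_le_eRk_of_subset inter_subset_right)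
  exact Matroid.ext_isBase (hME.trans hNE.symm) fun B _ ↦
    ⟨hbase hN hNE h hrank, hbase hM hME (fun F hF ↦ (h F hF).symm) hrank.symm⟩

end CrossingClosed

section Window

open Set

variable {n : ℕ} {l m : ℕ} {p : Fin n}

/-- The cyclic window of residues modulo `n` of the integers in `[l, m)`. -/
def window (n l m : ℕ) : Set (Fin n) :=
  {i | ∃ q ∈ Ico l m, q % n = i}

theorem mem_window_of_eq_add_mul {l' t : ℕ} (hl' : l' = p + n * t) (h : l' ∈ Ico l m) :
    p ∈ window n l m :=
  ⟨l', h, by rw [hl', Nat.add_mul_mod_self_left, Nat.mod_eq_of_lt p.isLt]⟩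

theorem window_mono {l' m' : ℕ} (hl : l' ≤ l) (hm : m ≤ m') : window n l m ⊆ window n l' m' :=
  fun _ ⟨q, hq, h⟩ ↦ ⟨q, Ico_subset_Ico hl hm hq, h⟩

@[simp]
theorem window_self : window n l l = ∅ := by
  simp [window]

theorem window_eq_insert_left (h : l < m) (hp : l % n = p) :
    window n l m = insert p (window n (l + 1) m) := by
  have : Ico l m = insert l (Ico (l + 1) m) := by grind
  ext i
  simp only [window, this, mem_ofPred_eq, mem_insert_iff, exists_eq_or_imp, hp, Fin.ext_iff,
    eq_comm (a := (p : ℕ))]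

theorem window_succ_right (h : l ≤ m) (hp : m % n = p) :
    window n l (m + 1) = insert p (window n l m) := by
  have : Ico l (m + 1) = insert m (Ico l m) := by grind
  ext i
  simp only [window, this, mem_ofPred_eq, mem_insert_iff, exists_eq_or_imp, hp, Fin.ext_iff,
    eq_comm (a := (p : ℕ))]

theorem window_add_mul (l m t : ℕ) : window n (l + n * t) (m + n * t) = window n l m := by
  ext i
  constructor
  · rintro ⟨q, ⟨hl, hm⟩, hq⟩
    obtain ⟨q, rfl⟩ := Nat.exists_eq_add_of_le' ((Nat.le_add_left _ _).trans hl)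
    exact ⟨q, ⟨by omega, by omega⟩, by rwa [Nat.add_mul_mod_self_left] at hq⟩
  · rintro ⟨q, ⟨hl, hm⟩, hq⟩
    exact ⟨q + n * t, ⟨by omega, by omega⟩, by rwa [Nat.add_mul_mod_self_left]⟩

theorem mem_window_of_le (hm : m ≤ n) : p ∈ window n l m ↔ l ≤ p ∧ p < m := by
  constructor
  · rintro ⟨q, ⟨hl, hq⟩, hp⟩
    rw [Nat.mod_eq_of_lt (hq.trans_le hm)] at hp
    exact ⟨hp ▸ hl, hp ▸ hq⟩
  · exact fun h ↦ ⟨p, h, Nat.mod_eq_of_lt p.isLt⟩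

theorem mem_window_add (hl : l ≤ n) (hm : m ≤ n) : p ∈ window n l (m + n) ↔ l ≤ p ∨ p < m := by
  have := p.isLt
  constructor
  · rintro ⟨q, ⟨hlq, hq⟩, hp⟩
    rcases lt_or_ge q n with h | h
    · rw [Nat.mod_eq_of_lt h] at hp
      omega
    · rw [Nat.mod_eq_sub_mod h, Nat.mod_eq_of_lt (by omega)] at hp
      omega
  · rintro (h | h)
    · exact ⟨p, ⟨h, by omega⟩, Nat.mod_eq_of_lt this⟩
    · exact ⟨p + n, ⟨by omega, by omega⟩, by rw [Nat.add_mod_right, Nat.mod_eq_of_lt this]⟩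

theorem exists_mem_iff_of_ordConnected {F : Set (Fin n)} (hF : F.OrdConnected) :
    ∃ l m, l ≤ m ∧ m ≤ n ∧ ∀ i, i ∈ F ↔ l ≤ i.val ∧ i.val < m := by
  rcases F.eq_empty_or_nonempty with rfl | hne
  · exact ⟨0, 0, le_rfl, Nat.zero_le n, by simp⟩
  obtain ⟨u, hu, humin⟩ := F.toFinite.exists_minimal hne
  obtain ⟨v, hv, hvmax⟩ := F.toFinite.exists_maximal hne
  have huv : u ≤ v := (le_total u v).elim id (humin hv)
  refine ⟨u, v + 1, Nat.le_succ_of_le huv, v.isLt, fun i ↦ ⟨fun hi ↦ ?_, fun hi ↦ ?_⟩⟩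
  · exact ⟨(le_total u i).elim id (humin hi),
      Nat.lt_succ_of_le ((le_total i v).elim id (hvmax hi))⟩
  · exact hF.out hu hv ⟨hi.1, Nat.le_of_lt_succ hi.2⟩

theorem IsCyclicInterval.exists_eq_window {F : Set (Fin n)} (hF : IsCyclicInterval F) :
    ∃ l m, l ≤ m ∧ m ≤ l + n ∧ F = window n l m := by
  rcases hF with hF | hF
  · obtain ⟨l, m, hlm, hm, hF⟩ := exists_mem_iff_of_ordConnected hF
    exact ⟨l, m, hlm, by omega, ext fun i ↦ by rw [mem_window_of_le hm, hF]⟩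
  · obtain ⟨l, m, hlm, hm, hF⟩ := exists_mem_iff_of_ordConnected hF
    refine ⟨m, l + n, by omega, by omega, ext fun i ↦ ?_⟩
    have := hF i
    rw [mem_compl_iff] at this
    rw [mem_window_add hm (hlm.trans hm)]
    grind

end Window

section HasType

open Set

variable {n : ℕ} {M N : Matroid (Fin n)} {f : Fin n → ℕ} {l m t : ℕ} {p q : Fin n}

/-- `M` has type `f` when `f p ∈ [p, p + n]` is the last position up to which the elements
cyclically following `p` have to be taken in order to span `p`. Such an `f` is one period of the
bounded affine permutation (equivalently, the decorated permutation) of `M`. -/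
def HasType (M : Matroid (Fin n)) (f : Fin n → ℕ) : Prop :=
  ∀ (p : Fin n) (m : ℕ), p < m → m ≤ p + n → (p ∈ M.closure (window n (p + 1) m) ↔ f p < m)

/-- The values `f 0, …, f (n - 1)` over one period of a bounded affine permutation of `ℤ`. -/
structure IsBoundedAffine (f : Fin n → ℕ) : Prop where
  le_apply (p : Fin n) : p ≤ f p
  apply_le (p : Fin n) : f p ≤ p + n
  injective_mod : Function.Injective fun p ↦ f p % n

theorem HasType.mem_closure_iff (hf : HasType M f) (hl : l = p + n * t) (h : l < m)
    (h' : m ≤ l + n) : p ∈ M.closure (window n (l + 1) m) ↔ f p + n * t < m := by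
  subst hl
  obtain ⟨m, rfl⟩ := Nat.exists_eq_add_of_le' ((Nat.le_add_left _ _).trans h.le)
  rw [add_right_comm, window_add_mul, hf p m (by omega) (by omega), Nat.add_lt_add_iff_right]

theorem HasType.eRk_window_eq (hM : HasType M f) (hN : HasType N f) (hME : M.E = univ)
    (hNE : N.E = univ) (hlm : l ≤ m) (hm : m ≤ l + n) :
    M.eRk (window n l m) = N.eRk (window n l m) := by
  induction hlm using Nat.decreasingInduction with
  | self => simp
  | of_succ l hl ih =>
    have hn : 0 < n := by omega
    let p : Fin n := ⟨l % n, Nat.mod_lt _ hn⟩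
    have hp : l = p + n * (l / n) := (Nat.mod_add_div l n).symm
    rw [window_eq_insert_left hl (p := p) rfl]
    have hMp := hM.mem_closure_iff hp hl hm
    have hNp := hN.mem_closure_iff hp hl hm
    have ih := ih (by omega)
    by_cases h : f p + n * (l / n) < m
    · rw [← M.eRk_insert_closure_eq, insert_eq_of_mem (hMp.2 h), M.eRk_closure_eq,
        ← N.eRk_insert_closure_eq, insert_eq_of_mem (hNp.2 h), N.eRk_closure_eq, ih]
    · rw [M.eRk_insert_eq_add_one ⟨hME ▸ mem_univ p, mt hMp.1 h⟩,
        N.eRk_insert_eq_add_one ⟨hNE ▸ mem_univ p, mt hNp.1 h⟩, ih]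

theorem HasType.mem_closure_window_apply (hf : HasType M f) (hle : q ≤ f q) (hlt : f q < q + n)
    (hl : l = q + n * t) (hm : m = f q + n * t) (hp : m % n = p) :
    p ∈ M.closure (window n l m) := by
  have hq_mem : q ∈ M.closure (window n (l + 1) (m + 1)) := by
    rw [hf.mem_closure_iff hl (by omega) (by omega)]
    omega
  rcases (show l ≤ m by omega).eq_or_lt with rfl | hlm
  · have hpq : p = q := Fin.ext (by
      rw [← hp, hl, Nat.add_mul_mod_self_left, Nat.mod_eq_of_lt q.isLt])
    rw [window_self] at hq_mem
    exact hpq ▸ M.closure_subset_closure (empty_subset _) hq_mem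
  · have hq_notMem : q ∉ M.closure (window n (l + 1) m) := by
      rw [hf.mem_closure_iff hl (by omega) (by omega)]
      omega
    rw [window_succ_right (by omega) hp] at hq_mem
    refine M.closure_subset_closure (insert_subset ?_ (window_mono (by omega) le_rfl))
      (M.closure_exchange ⟨hq_mem, hq_notMem⟩).1
    exact mem_window_of_eq_add_mul hl ⟨le_rfl, hlm⟩

theorem HasType.not_lt_of_add_mul_eq (hf : HasType M f) (hle : ∀ p, p ≤ f p)
    (hge : ∀ p, f p ≤ p + n) {s : ℕ} (h : f p + n * s = f q + n * t) :
    ¬ p + n * s < q + n * t := by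
  intro hlt
  have hp := hge p
  have hq := hle q
  obtain ⟨l, hl⟩ : ∃ l, l = p + n * s := ⟨_, rfl⟩
  obtain ⟨l', hl'⟩ : ∃ l', l' = q + n * t := ⟨_, rfl⟩
  obtain ⟨m, hm⟩ : ∃ m, m = f q + n * t := ⟨_, rfl⟩
  rw [← hl, ← hl'] at hlt
  rw [← hm] at h
  let z : Fin n := ⟨m % n, Nat.mod_lt _ p.pos⟩
  have hp_notMem : p ∉ M.closure (window n (l + 1) m) := by
    rw [hf.mem_closure_iff hl (by omega) (by omega)]
    omega
  have hz_mem : z ∈ M.closure (window n (l + 1) m) :=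
    M.closure_subset_closure (window_mono (by omega) le_rfl)
      (hf.mem_closure_window_apply hq (by omega) hl' hm rfl)
  rcases (show m ≤ l + n by omega).eq_or_lt with hml | hml
  · have hzp : z = p := Fin.ext (by
      simp only [z, hml, hl, Nat.add_mod_right, Nat.add_mul_mod_self_left,
        Nat.mod_eq_of_lt p.isLt])
    exact hp_notMem (hzp ▸ hz_mem)
  · have hp_mem := (hf.mem_closure_iff hl (m := m + 1) (by omega) hml).2 (by omega)
    rw [window_succ_right (by omega) (p := z) rfl,
      Matroid.closure_insert_eq_of_mem_closure hz_mem] at hp_mem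
    exact hp_notMem hp_mem

theorem HasType.isBoundedAffine (hf : HasType M f) (hle : ∀ p, p ≤ f p)
    (hge : ∀ p, f p ≤ p + n) : IsBoundedAffine f where
  le_apply := hle
  apply_le := hge
  injective_mod p q (h : f p % n = f q % n) := by
    have hadd : f p + n * (f q / n) = f q + n * (f p / n) := by
      have := Nat.mod_add_div (f p) n
      have := Nat.mod_add_div (f q) n
      omega
    have heq : (p : ℕ) + n * (f q / n) = q + n * (f p / n) :=
      le_antisymm (not_lt.1 (hf.not_lt_of_add_mul_eq hle hge hadd.symm))
        (not_lt.1 (hf.not_lt_of_add_mul_eq hle hge hadd))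
    have := congrArg (· % n) heq
    simpa [Nat.add_mul_mod_self_left, Nat.mod_eq_of_lt, Fin.ext_iff] using this

theorem exists_hasType (M : Matroid (Fin n)) : ∃ f, IsBoundedAffine f ∧ HasType M f := by
  classical
  have hex (p : Fin n) :
      ∃ m, (p : ℕ) ≤ m ∧ (m = p + n ∨ p ∈ M.closure (window n (p + 1) (m + 1))) :=
    ⟨p + n, by omega, Or.inl rfl⟩
  let f (p : Fin n) : ℕ := Nat.find (hex p)
  have hge (p : Fin n) : f p ≤ p + n := Nat.find_min' (hex p) ⟨by omega, Or.inl rfl⟩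
  have hf : HasType M f := fun p m hpm hmp ↦ by
    constructor
    · intro h
      obtain ⟨m, rfl⟩ : ∃ m', m = m' + 1 := ⟨m - 1, by omega⟩
      exact Nat.lt_succ_of_le (Nat.find_min' (hex p) ⟨by omega, Or.inr h⟩)
    · intro h
      have hp : p ∈ M.closure (window n (p + 1) (f p + 1)) :=
        (Nat.find_spec (hex p)).2.resolve_left (h.trans_le hmp).ne
      exact M.closure_subset_closure (window_mono le_rfl h) hp
  exact ⟨f, hf.isBoundedAffine (fun p ↦ (Nat.find_spec (hex p)).1) hge, hf⟩

end HasType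

section VectorMatroid

open Set Submodule

variable {α : Type*} [Finite α] {K V : Type*} [DivisionRing K] [AddCommGroup V] [Module K V]
  {v : α → V} {e : α} {I J X : Set α}

theorem finrank_span_image_eq_ncard (hI : LinearIndepOn K v I) :
    Module.finrank K (span K (v '' I)) = I.ncard := by
  have := I.toFinite.fintype
  rw [image_eq_range, finrank_span_eq_card hI, ← Nat.card_eq_fintype_card, Nat.card_coe_set_eq]

theorem exists_linearIndepOn_insert_of_ncard_lt (hI : LinearIndepOn K v I)
    (hJ : LinearIndepOn K v J) (hlt : I.ncard < J.ncard) :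
    ∃ e ∈ J, e ∉ I ∧ LinearIndepOn K v (insert e I) := by
  by_contra! hmax
  have hspan : span K (v '' J) ≤ span K (v '' I) := by
    rw [span_le]
    rintro _ ⟨e, he, rfl⟩
    by_contra heI
    exact hmax e he (fun h ↦ heI (subset_span ⟨e, h, rfl⟩)) (hI.insert heI)
  have : FiniteDimensional K (span K (v '' I)) :=
    FiniteDimensional.span_of_finite K (I.toFinite.image v)
  have := finrank_mono hspan
  rw [finrank_span_image_eq_ncard hI, finrank_span_image_eq_ncard hJ] at this
  omega

variable (K) in
/-- The matroid of linear independence of a finite family of vectors. -/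
def vectorMatroid (v : α → V) : Matroid α :=
  (IndepMatroid.ofFinite (toFinite univ) (LinearIndepOn K v) (linearIndepOn_empty K v)
    (fun _ _ hJ hIJ ↦ hJ.mono hIJ) (fun _ _ ↦ exists_linearIndepOn_insert_of_ncard_lt)
    (fun _ _ ↦ subset_univ _)).matroid

@[simp]
theorem vectorMatroid_ground : (vectorMatroid K v).E = univ :=
  rfl

@[simp]
theorem vectorMatroid_indep_iff : (vectorMatroid K v).Indep I ↔ LinearIndepOn K v I := by
  simp [vectorMatroid]

theorem span_image_eq_of_isBasis_vectorMatroid (hI : (vectorMatroid K v).IsBasis I X) :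
    span K (v '' I) = span K (v '' X) := by
  refine le_antisymm (span_mono (image_mono hI.subset)) (span_le.2 ?_)
  rintro _ ⟨e, he, rfl⟩
  by_contra heI
  have hind := vectorMatroid_indep_iff.2 ((vectorMatroid_indep_iff.1 hI.indep).insert heI)
  have he := hI.mem_of_insert_indep he hind
  exact heI (subset_span ⟨e, he, rfl⟩)

theorem mem_closure_vectorMatroid_iff :
    e ∈ (vectorMatroid K v).closure X ↔ v e ∈ span K (v '' X) := by
  obtain ⟨I, hI⟩ := (vectorMatroid K v).exists_isBasis X
  rw [← hI.closure_eq_closure, ← span_image_eq_of_isBasis_vectorMatroid hI, ← not_iff_not,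
    hI.indep.notMem_closure_iff, vectorMatroid_indep_iff,
    (vectorMatroid_indep_iff.1 hI.indep).notMem_span_iff]

theorem eRk_vectorMatroid (X : Set α) :
    (vectorMatroid K v).eRk X = Module.finrank K (span K (v '' X)) := by
  obtain ⟨I, hI⟩ := (vectorMatroid K v).exists_isBasis X
  rw [← hI.encard_eq_eRk, ← span_image_eq_of_isBasis_vectorMatroid hI,
    finrank_span_image_eq_ncard (vectorMatroid_indep_iff.1 hI.indep),
    I.toFinite.cast_ncard_eq]

end VectorMatroid

section AlternatingMap

open Matrix

variable {R V W : Type*} [CommRing R] [AddCommGroup V] [Module R V] {k : ℕ}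

theorem three_term_relation_of_isAlt {B : V →ₗ[R] V →ₗ[R] R} (hB : B.IsAlt) {a b c : V}
    (hc : c ∈ Submodule.span R {a, b} ⊔ LinearMap.ker B) (d : V) :
    B a c * B b d = B a b * B c d + B a d * B b c := by
  obtain ⟨x, hx, s, hs, rfl⟩ := Submodule.mem_sup.1 hc
  obtain ⟨r, t, rfl⟩ := Submodule.mem_span_pair.1 hx
  have hBs (y : V) : B s y = 0 := by rw [LinearMap.mem_ker.1 hs, LinearMap.zero_apply]
  have hsB (y : V) : B y s = 0 := by rw [← hB.neg, hBs, neg_zero]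
  simp only [map_add, map_smul, LinearMap.add_apply, LinearMap.smul_apply, smul_eq_mul, hBs, hsB,
    hB.self_eq_zero, ← hB.neg a b]
  ring

variable [AddCommGroup W] [Module R W]

/-- The alternating bilinear map `(x, y) ↦ f (x, y, w₀, …, wₖ₋₁)`. -/
def curryPair (f : V [⋀^Fin (k + 2)]→ₗ[R] W) (w : Fin k → V) : V →ₗ[R] V →ₗ[R] W :=
  LinearMap.mk₂ R (fun x y ↦ f (vecCons x (vecCons y w)))
    (fun x x' y ↦ f.map_vecCons_add (vecCons y w) x x')
    (fun r x y ↦ f.map_vecCons_smul (vecCons y w) r x)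
    (fun x y y' ↦ (f.curryLeft x).map_vecCons_add w y y')
    (fun r x y ↦ (f.curryLeft x).map_vecCons_smul w r y)

theorem curryPair_apply (f : V [⋀^Fin (k + 2)]→ₗ[R] W) (w : Fin k → V) (x y : V) :
    curryPair f w x y = f (vecCons x (vecCons y w)) :=
  rfl

theorem isAlt_curryPair (f : V [⋀^Fin (k + 2)]→ₗ[R] R) (w : Fin k → V) :
    (curryPair f w).IsAlt :=
  fun x ↦ DFunLike.congr_fun (f.curryLeft_same x) w

theorem mem_ker_curryPair (f : V [⋀^Fin (k + 2)]→ₗ[R] W) (w : Fin k → V) (i : Fin k) :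
    w i ∈ LinearMap.ker (curryPair f w) :=
  LinearMap.ext fun y ↦ f.map_eq_zero_of_eq _ (i := 0) (j := i.succ.succ) (by simp)
    (Fin.succ_ne_zero _).symm

variable {α : Type*} [LinearOrder α]

theorem card_filter_lt_orderEmbOfFin {S : Finset α} (hS : S.card = k) (p : Fin k) :
    (S.filter (· < S.orderEmbOfFin hS p)).card = p := by
  have : S.filter (· < S.orderEmbOfFin hS p) =
      (Finset.Iio p).map (S.orderEmbOfFin hS).toEmbedding := by
    ext y
    have hy : y ∈ S ↔ ∃ j, S.orderEmbOfFin hS j = y := by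
      rw [← Finset.mem_coe, ← Finset.range_orderEmbOfFin S hS, Set.mem_range]
    simp only [Finset.mem_filter, Finset.mem_map, Finset.mem_Iio, hy, exists_and_right.symm,
      RelEmbedding.coe_toEmbedding]
    exact exists_congr fun j ↦ by
      rw [and_comm]; exact and_congr_left fun h ↦ by rw [← h, OrderEmbedding.lt_iff_lt]
  rw [this, Finset.card_map, Fin.card_Iio]

theorem alternatingMap_orderEmbOfFin_insert (f : V [⋀^Fin (k + 1)]→ₗ[R] W) (v : α → V)
    {S : Finset α} (hS : S.card = k) {x : α} (hxS : (insert x S).card = k + 1) :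
    f (v ∘ (insert x S).orderEmbOfFin hxS) =
      (-1 : ℤ) ^ (S.filter (· < x)).card • f (vecCons (v x) (v ∘ S.orderEmbOfFin hS)) := by
  obtain ⟨p, hp⟩ : x ∈ Set.range ((insert x S).orderEmbOfFin hxS) := by simp
  have hcard : (S.filter (· < x)).card = p := by
    rw [← card_filter_lt_orderEmbOfFin hxS p, hp, Finset.filter_insert, if_neg (lt_irrefl x)]
  have hemb : (fun j ↦ (insert x S).orderEmbOfFin hxS (p.succAbove j)) = S.orderEmbOfFin hS := by
    refine Finset.orderEmbOfFin_unique hS (fun j ↦ ?_)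
      (((insert x S).orderEmbOfFin hxS).strictMono.comp (Fin.strictMono_succAbove p))
    refine (Finset.mem_insert.1 (Finset.orderEmbOfFin_mem _ hxS _)).resolve_left fun h ↦ ?_
    exact Fin.succAbove_ne p j (((insert x S).orderEmbOfFin hxS).injective (h.trans hp.symm))
  rw [hcard, ← f.map_insertNth, ← hemb]
  congr 1
  rw [eq_comm, Fin.insertNth_eq_iff]
  exact ⟨by simp [hp], rfl⟩

end AlternatingMap

section Minor

open Matrix

variable {k n : ℕ}

theorem minor_eq_detRowAlternating {A : Matrix (Fin k) (Fin n) ℝ} {I : Finset (Fin n)}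
    (h : I.card = k) : minor k n A I = detRowAlternating (A.col ∘ I.orderEmbOfFin h) := by
  rw [minor, dif_pos h, ← det_transpose]
  rfl

theorem minor_insert (A : Matrix (Fin (k + 1)) (Fin n) ℝ) {S : Finset (Fin n)} (hS : S.card = k)
    {x : Fin n} (hx : x ∉ S) :
    minor (k + 1) n A (insert x S) = (-1) ^ (S.filter (· < x)).card *
      detRowAlternating (vecCons (A.col x) (A.col ∘ S.orderEmbOfFin hS)) := by
  have hxS : (insert x S).card = k + 1 := by rw [Finset.card_insert_of_notMem hx, hS]
  rw [minor_eq_detRowAlternating hxS, alternatingMap_orderEmbOfFin_insert _ _ hS, zsmul_eq_mul]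
  norm_cast

theorem minor_insert_insert (A : Matrix (Fin (k + 2)) (Fin n) ℝ) {S : Finset (Fin n)}
    (hS : S.card = k) {x y : Fin n} (hxy : x < y) (hx : x ∉ S) (hy : y ∉ S) :
    minor (k + 2) n A (insert x (insert y S)) =
      (-1) ^ (S.filter (· < x)).card * ((-1) ^ (S.filter (· < y)).card *
        curryPair detRowAlternating (A.col ∘ S.orderEmbOfFin hS) (A.col x) (A.col y)) := by
  have hyS : (insert y S).card = k + 1 := by rw [Finset.card_insert_of_notMem hy, hS]
  rw [minor_insert A hyS (by simp [hx, hxy.ne]), Finset.filter_insert, if_neg hxy.not_gt,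
    curryPair_apply, ← AlternatingMap.curryLeft_apply_apply,
    alternatingMap_orderEmbOfFin_insert _ _ hS, zsmul_eq_mul]
  norm_cast

theorem minor_ne_zero_iff {A : Matrix (Fin k) (Fin n) ℝ} {I : Finset (Fin n)} :
    minor k n A I ≠ 0 ↔ I.card = k ∧ LinearIndepOn ℝ A.col I := by
  by_cases h : I.card = k
  · rw [minor, dif_pos h, ← isUnit_iff_ne_zero, ← isUnit_iff_isUnit_det,
      ← linearIndependent_cols_iff_isUnit, and_iff_right h]
    exact linearIndependent_equiv' (I.orderIsoOfFin h).toEquiv rfl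
  · simp [minor, h]

theorem isBase_vectorMatroid_col_iff {A : Matrix (Fin k) (Fin n) ℝ} (hA : A.rank = k)
    {I : Finset (Fin n)} : (vectorMatroid ℝ A.col).IsBase I ↔ minor k n A I ≠ 0 := by
  have hrank : (vectorMatroid ℝ A.col).eRank = k := by
    rw [← Matroid.eRk_univ_eq, eRk_vectorMatroid, Set.image_univ,
      ← rank_eq_finrank_span_cols, hA]
  rw [minor_ne_zero_iff, ← vectorMatroid_indep_iff]
  constructor
  · intro h
    have := h.encard_eq_eRank
    rw [hrank, Set.encard_coe_eq_coe_finsetCard] at this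
    exact ⟨by exact_mod_cast this, h.indep⟩
  · rintro ⟨hcard, h⟩
    exact h.isBase_of_eRk_ge I.finite_toSet
      (by rw [h.eRk_eq_encard, Set.encard_coe_eq_coe_finsetCard, hcard, hrank])

theorem minor_three_term_relation (A : Matrix (Fin (k + 2)) (Fin n) ℝ) {S : Finset (Fin n)}
    (hS : S.card = k) {a b c d : Fin n} (hab : a < b) (hbc : b < c) (hcd : c < d)
    (ha : a ∉ S) (hb : b ∉ S) (hc : c ∉ S) (hd : d ∉ S)
    (h : minor (k + 2) n A (insert a (insert b S)) ≠ 0) :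
    minor (k + 2) n A (insert a (insert c S)) * minor (k + 2) n A (insert b (insert d S)) =
      minor (k + 2) n A (insert a (insert b S)) * minor (k + 2) n A (insert c (insert d S)) +
        minor (k + 2) n A (insert a (insert d S)) *
          minor (k + 2) n A (insert b (insert c S)) := by
  obtain ⟨hcard, hI⟩ := minor_ne_zero_iff.1 h
  have hspan := hI.span_eq_top_of_card_eq_finrank' (by simp [hcard])
  have hmem : A.col c ∈ Submodule.span ℝ {A.col a, A.col b} ⊔
      LinearMap.ker (curryPair detRowAlternating (A.col ∘ S.orderEmbOfFin hS)) := by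
    have htop : Submodule.span ℝ (Set.range fun i : ↥(insert a (insert b S)) ↦ A.col i) ≤
        Submodule.span ℝ {A.col a, A.col b} ⊔
          LinearMap.ker (curryPair detRowAlternating (A.col ∘ S.orderEmbOfFin hS)) := by
      rw [Submodule.span_le]
      rintro _ ⟨⟨i, hi⟩, rfl⟩
      rcases Finset.mem_insert.1 hi with rfl | hi
      · exact Submodule.mem_sup_left (Submodule.subset_span (by simp))
      rcases Finset.mem_insert.1 hi with rfl | hi
      · exact Submodule.mem_sup_left (Submodule.subset_span (by simp))
      · obtain ⟨j, rfl⟩ : i ∈ Set.range (S.orderEmbOfFin hS) := by simpa using hi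
        exact Submodule.mem_sup_right (mem_ker_curryPair _ _ j)
    exact htop (hspan ▸ Submodule.mem_top)
  have := three_term_relation_of_isAlt (isAlt_curryPair _ _) hmem (A.col d)
  rw [minor_insert_insert A hS (hab.trans hbc) ha hc,
    minor_insert_insert A hS (hbc.trans hcd) hb hd, minor_insert_insert A hS hab ha hb,
    minor_insert_insert A hS hcd hc hd, minor_insert_insert A hS (hab.trans (hbc.trans hcd)) ha hd,
    minor_insert_insert A hS hbc hb hc]
  linear_combination (-1) ^ (S.filter (· < a)).card * (-1) ^ (S.filter (· < b)).card *
    (-1) ^ (S.filter (· < c)).card * (-1) ^ (S.filter (· < d)).card * this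

/-- A real matrix all of whose maximal minors are nonnegative. -/
def TotallyNonneg (A : Matrix (Fin k) (Fin n) ℝ) : Prop :=
  ∀ I, 0 ≤ minor k n A I

theorem TotallyNonneg.crossingClosed {A : Matrix (Fin k) (Fin n) ℝ} (h : TotallyNonneg A)
    (hA : A.rank = k) : CrossingClosed (vectorMatroid ℝ A.col) := by
  classical
  intro S a b c d hab hbc hcd ha hb hc hd hSab hSad hSbc hScd
  lift S to Finset (Fin n) using S.toFinite
  simp only [← Finset.coe_insert, isBase_vectorMatroid_col_iff hA, Finset.mem_coe] at *
  obtain rfl : S.card + 2 = k := by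
    rw [← (minor_ne_zero_iff.1 hSab).1, Finset.card_insert_of_notMem (by simp [ha, hab.ne]),
      Finset.card_insert_of_notMem hb]
  have hpos {I : Finset (Fin n)} (hI : minor (S.card + 2) n A I ≠ 0) :
      0 < minor (S.card + 2) n A I :=
    (h I).lt_of_ne' hI
  rw [← mul_ne_zero_iff, minor_three_term_relation A rfl hab hbc hcd ha hb hc hd hSab]
  exact (add_pos (mul_pos (hpos hSab) (hpos hScd)) (mul_pos (hpos hSad) (hpos hSbc))).ne'

end Minor

section LoopsAndColoops

open Set Matroid

theorem mem_closure_union_iff_of_isLoop_or_isColoop {α : Type*} {M : Matroid α} {X D : Set α}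
    {a : α} (hD : ∀ q ∈ D, M.IsLoop q ∨ M.IsColoop q) (ha : a ∉ D) :
    a ∈ M.closure (X ∪ D) ↔ a ∈ M.closure X := by
  have hX : X ∪ D ∪ M.loops = X ∪ D ∩ M.coloops ∪ M.loops := by
    grind [isLoop_iff, isColoop_iff_mem_coloops]
  rw [← closure_union_loops_eq, hX, closure_union_loops_eq,
    closure_union_eq_of_subset_coloops _ inter_subset_right, mem_union,
    or_iff_left fun h ↦ ha h.1]

variable {n : ℕ} {M : Matroid (Fin n)} {f : Fin n → ℕ} {m : ℕ} {p q : Fin n}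

theorem window_succ_add_self (p : Fin n) : window n (p + 1) (p + n) = {p}ᶜ := by
  have := p.isLt
  ext q
  rw [mem_window_add (by omega) (by omega), mem_compl_singleton_iff, Ne, Fin.ext_iff]
  omega

theorem notMem_window_succ (hm : m ≤ p + n) : p ∉ window n (p + 1) m := fun h ↦ by
  simpa [window_succ_add_self] using window_mono le_rfl hm h

theorem HasType.isLoop (hf : HasType M f) (hq : f q = q) : M.IsLoop q := by
  have := q.isLt
  rw [isLoop_iff, ← closure_empty, ← window_self (n := n) (l := q + 1),
    hf q _ (by omega) (by omega), hq]
  omega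

theorem HasType.isColoop (hf : HasType M f) (hME : M.E = univ) (hq : f q = q + n) :
    M.IsColoop q := by
  have := q.isLt
  rw [isColoop_iff_notMem_closure_compl (by simp [hME]), hME, ← compl_eq_univ_sdiff,
    ← window_succ_add_self, hf q _ (by omega) le_rfl]
  omega

theorem hasType_of_isLoop_or_isColoop
    (h : ∀ p, f p = p ∧ M.IsLoop p ∨ f p = p + n ∧ M.IsColoop p) : HasType M f := by
  intro p m hpm hm
  rcases h p with ⟨hf, hp⟩ | ⟨hf, hp⟩
  · exact iff_of_true (hp.mem_closure _) (by omega)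
  · exact iff_of_false (hp.notMem_closure_of_notMem (notMem_window_succ hm)) (by omega)

end LoopsAndColoops

section Bridge

open Set Submodule

/-- The situation in which composing the bounded affine permutation `f` with the transposition
of `i` and `j` amounts to removing a bridge: every position strictly between `i` and `j` is
fixed (modulo `n`) by `f`. -/
structure IsBridge {n : ℕ} (f : Fin n → ℕ) (i j : Fin n) : Prop where
  lt : i < j
  apply_left_lt : f i < n
  le_apply_left : j ≤ f i
  le_apply_right : n ≤ f j
  apply_right_le : f j ≤ i + n
  fixed (q : Fin n) : q ∈ Ioo i j → f q = q ∨ f q = q + n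

theorem mem_span_or_mem_span_insert_of_add_smul {K V : Type*} [DivisionRing K] [AddCommGroup V]
    [Module K V] {s : Set V} {x y : V} {τ : K} (hx : x ∈ span K (insert (y + τ • x) s)) :
    y ∈ span K s ∨ x ∈ span K (insert y s) := by
  obtain ⟨c, u, hu, hcu⟩ := mem_span_insert.1 hx
  have hxy : (1 - c * τ) • x = c • y + u := by
    rw [sub_smul, one_smul, mul_smul, sub_eq_iff_eq_add]
    exact hcu.trans (by rw [smul_add, add_right_comm])
  by_cases hc : c * τ = 1
  · rw [hc, sub_self, zero_smul, eq_comm, add_eq_zero_iff_eq_neg] at hxy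
    exact Or.inl <| (smul_mem_iff _ (left_ne_zero_of_mul_eq_one hc)).1 (hxy ▸ neg_mem hu)
  · refine Or.inr <| (smul_mem_iff _ (sub_ne_zero.2 (Ne.symm hc))).1 ?_
    exact mem_span_insert.2 ⟨c, u, hu, hxy⟩

variable {K V : Type*} [DivisionRing K] [AddCommGroup V] [Module K V]

theorem span_image_update_add_smul {α : Type*} [DecidableEq α] (v : α → V) {i j : α} (hij : i ≠ j)
    (τ : K) {X : Set α} (hX : j ∈ X → i ∈ X) :
    span K (Function.update v j (v j + τ • v i) '' X) = span K (v '' X) := by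
  have hle (v : α → V) (τ : K) :
      span K (Function.update v j (v j + τ • v i) '' X) ≤ span K (v '' X) := by
    rw [span_le]
    rintro _ ⟨q, hq, rfl⟩
    obtain rfl | hqj := eq_or_ne q j
    · rw [Function.update_self]
      exact add_mem (subset_span ⟨q, hq, rfl⟩) (smul_mem _ _ (subset_span ⟨i, hX hq, rfl⟩))
    · rw [Function.update_of_ne hqj]
      exact subset_span ⟨q, hq, rfl⟩
  refine (hle v τ).antisymm ?_
  simpa [hij] using hle (Function.update v j (v j + τ • v i)) (-τ)

variable {n : ℕ} {v : Fin n → V} {f : Fin n → ℕ} {i j p : Fin n} {m : ℕ} {τ : K}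

theorem mem_closure_vectorMatroid_update_iff {X : Set (Fin n)} (hij : i ≠ j) (hp : p ≠ j)
    (hX : j ∈ X → i ∈ X) :
    p ∈ (vectorMatroid K (Function.update v j (v j + τ • v i))).closure X ↔
      p ∈ (vectorMatroid K v).closure X := by
  rw [mem_closure_vectorMatroid_iff, mem_closure_vectorMatroid_iff,
    span_image_update_add_smul v hij τ hX, Function.update_of_ne hp]

theorem isLoop_vectorMatroid_update_iff (hij : i ≠ j) (hp : p ≠ j) :
    (vectorMatroid K (Function.update v j (v j + τ • v i))).IsLoop p ↔
      (vectorMatroid K v).IsLoop p :=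
  mem_closure_vectorMatroid_update_iff hij hp fun h ↦ h.elim

theorem isColoop_vectorMatroid_update_iff (hij : i ≠ j) (hpi : p ≠ i) (hpj : p ≠ j) :
    (vectorMatroid K (Function.update v j (v j + τ • v i))).IsColoop p ↔
      (vectorMatroid K v).IsColoop p := by
  rw [Matroid.isColoop_iff_notMem_closure_compl (mem_univ p),
    Matroid.isColoop_iff_notMem_closure_compl (mem_univ p), vectorMatroid_ground,
    vectorMatroid_ground, mem_closure_vectorMatroid_update_iff hij hpj (by simp [hpi.symm])]

theorem window_succ_eq_union_Ioo (hij : i < j) (hm : j < m) :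
    window n (i + 1) m = insert j (window n (j + 1) m) ∪ Ioo i j := by
  have := j.isLt
  rw [← window_eq_insert_left hm (Nat.mod_eq_of_lt j.isLt)]
  ext q
  simp only [window, mem_union, mem_ofPred_eq, mem_Ico, mem_Ioo, Fin.lt_def] at *
  constructor
  · rintro ⟨r, hr, hrq⟩
    by_cases hrj : j ≤ r
    · exact Or.inl ⟨r, ⟨hrj, hr.2⟩, hrq⟩
    · rw [Nat.mod_eq_of_lt (by omega)] at hrq
      omega
  · rintro (⟨r, hr, hrq⟩ | hq)
    · exact ⟨r, ⟨by omega, hr.2⟩, hrq⟩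
    · exact ⟨q, ⟨by omega, by omega⟩, Nat.mod_eq_of_lt q.isLt⟩

theorem IsBridge.isLoop_or_isColoop (h : IsBridge f i j) {M : Matroid (Fin n)}
    (hM : HasType M (f ∘ Equiv.swap i j)) (hME : M.E = univ) :
    ∀ q ∈ Ioo i j, M.IsLoop q ∨ M.IsColoop q := by
  intro q hq
  have hfq : (f ∘ Equiv.swap i j) q = f q := by
    rw [Function.comp_apply, Equiv.swap_apply_of_ne_of_ne hq.1.ne' hq.2.ne]
  exact (h.fixed q hq).imp (fun hq ↦ hM.isLoop (hfq.trans hq))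
    (fun hq ↦ hM.isColoop hME (hfq.trans hq))

theorem HasType.mem_span_right_iff (hM : HasType (vectorMatroid K v) (f ∘ Equiv.swap i j))
    (hm : j < m) (hm' : m ≤ j + n) : v j ∈ span K (v '' window n (j + 1) m) ↔ f i < m := by
  rw [← mem_closure_vectorMatroid_iff, hM j m hm hm']
  simp

theorem IsBridge.mem_span_left_iff (h : IsBridge f i j)
    (hM : HasType (vectorMatroid K v) (f ∘ Equiv.swap i j)) (hm : j < m) (hm' : m ≤ i + n) :
    v i ∈ span K (insert (v j) (v '' window n (j + 1) m)) ↔ f j < m := by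
  rw [← image_insert_eq, ← mem_closure_vectorMatroid_iff,
    ← mem_closure_union_iff_of_isLoop_or_isColoop (h.isLoop_or_isColoop hM rfl)
      (notMem_Ioo_of_le le_rfl), ← window_succ_eq_union_Ioo h.lt hm,
    hM i m ((Fin.lt_def.1 h.lt).trans hm) hm']
  simp

theorem IsBridge.isLoop_or_isColoop_update (h : IsBridge f i j)
    (hM : HasType (vectorMatroid K v) (f ∘ Equiv.swap i j)) :
    ∀ q ∈ Ioo i j, (vectorMatroid K (Function.update v j (v j + τ • v i))).IsLoop q ∨
      (vectorMatroid K (Function.update v j (v j + τ • v i))).IsColoop q := by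
  intro q hq
  rw [isLoop_vectorMatroid_update_iff h.lt.ne hq.2.ne,
    isColoop_vectorMatroid_update_iff h.lt.ne hq.1.ne' hq.2.ne]
  exact h.isLoop_or_isColoop hM rfl q hq

theorem IsBridge.mem_closure_left_iff (h : IsBridge f i j)
    (hM : HasType (vectorMatroid K v) (f ∘ Equiv.swap i j)) (hτ : τ ≠ 0) (hm : i < m)
    (hm' : m ≤ i + n) :
    i ∈ (vectorMatroid K (Function.update v j (v j + τ • v i))).closure (window n (i + 1) m) ↔
      f i < m := by
  have hij := h.lt.ne
  have := h.le_apply_left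
  have := h.apply_left_lt.trans_le h.le_apply_right
  obtain hmj | hmj := le_or_gt m j
  · rw [mem_closure_vectorMatroid_update_iff hij hij fun hj ↦
      absurd ((mem_window_of_le (by omega)).1 hj).2 (by omega), hM i m hm hm']
    simp only [Function.comp_apply, Equiv.swap_apply_left]
    omega
  have hmj' : m ≤ j + n := hm'.trans (Nat.add_le_add_right (Fin.lt_def.1 h.lt).le n)
  have hj : j ∉ window n (j + 1) m := notMem_window_succ hmj'
  rw [window_succ_eq_union_Ioo h.lt hmj, mem_closure_union_iff_of_isLoop_or_isColoop
    (h.isLoop_or_isColoop_update hM) (notMem_Ioo_of_le le_rfl), mem_closure_vectorMatroid_iff,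
    image_insert_eq, Function.update_self, Function.update_of_ne hij,
    image_congr fun q hq ↦ Function.update_of_ne (ne_of_mem_of_not_mem hq hj) _ _,
    ← hM.mem_span_right_iff hmj hmj']
  constructor
  · intro hi
    obtain hvj | hvi := mem_span_or_mem_span_insert_of_add_smul hi
    · exact hvj
    · rw [h.mem_span_left_iff hM hmj hm'] at hvi
      rw [hM.mem_span_right_iff hmj hmj']
      omega
  · intro hvj
    rw [← smul_mem_iff _ hτ, ← Submodule.add_mem_iff_right _ (span_mono (subset_insert _ _) hvj)]
    exact subset_span (mem_insert _ _)

theorem IsBridge.mem_closure_right_iff (h : IsBridge f i j)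
    (hM : HasType (vectorMatroid K v) (f ∘ Equiv.swap i j)) (hτ : τ ≠ 0) (hm : j < m)
    (hm' : m ≤ j + n) :
    j ∈ (vectorMatroid K (Function.update v j (v j + τ • v i))).closure (window n (j + 1) m) ↔
      f j < m := by
  have := h.apply_left_lt.trans_le h.le_apply_right
  rw [mem_closure_vectorMatroid_iff, span_image_update_add_smul v h.lt.ne τ
    (fun hj ↦ absurd hj (notMem_window_succ hm')), Function.update_self]
  obtain hmi | hmi := le_or_gt m (i + n)
  · rw [← h.mem_span_left_iff hM hm hmi]
    constructor
    · intro hsum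
      refine (smul_mem_iff _ hτ).1 ((Submodule.add_mem_iff_right _ ?_).1
        (span_mono (subset_insert _ _) hsum))
      exact subset_span (mem_insert _ _)
    · intro hi
      have hj : v j ∈ span K (v '' window n (j + 1) m) := by
        rw [h.mem_span_left_iff hM hm hmi] at hi
        rw [hM.mem_span_right_iff hm hm']
        omega
      rw [span_insert_eq_span hj] at hi
      exact add_mem hj (smul_mem _ _ hi)
  · have hi : i ∈ window n (j + 1) m :=
      mem_window_of_eq_add_mul (l' := i + n * 1) rfl ⟨by omega, by omega⟩
    have := h.apply_right_le
    refine iff_of_true (add_mem ((hM.mem_span_right_iff hm hm').2 (by omega)) ?_) (by omega)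
    exact smul_mem _ _ (subset_span ⟨i, hi, rfl⟩)

theorem IsBridge.hasType (h : IsBridge f i j) (hτ : τ ≠ 0)
    (hM : HasType (vectorMatroid K v) (f ∘ Equiv.swap i j)) :
    HasType (vectorMatroid K (Function.update v j (v j + τ • v i))) f := by
  intro p m hpm hm
  obtain rfl | hpi := eq_or_ne p i
  · exact h.mem_closure_left_iff hM hτ hpm hm
  obtain rfl | hpj := eq_or_ne p j
  · exact h.mem_closure_right_iff hM hτ hpm hm
  have hfp : (f ∘ Equiv.swap i j) p = f p := by
    rw [Function.comp_apply, Equiv.swap_apply_of_ne_of_ne hpi hpj]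
  rw [← hfp, ← hM p m hpm hm]
  by_cases hp : p ∈ Ioo i j
  · have hpX : p ∉ window n (p + 1) m := notMem_window_succ hm
    obtain hloop | hcoloop := h.isLoop_or_isColoop hM rfl p hp
    · exact iff_of_true (((isLoop_vectorMatroid_update_iff h.lt.ne hpj).2 hloop).mem_closure _)
        (hloop.mem_closure _)
    · exact iff_of_false (((isColoop_vectorMatroid_update_iff h.lt.ne hpi hpj).2
        hcoloop).notMem_closure_of_notMem hpX) (hcoloop.notMem_closure_of_notMem hpX)
  · refine mem_closure_vectorMatroid_update_iff h.lt.ne hpj fun hj ↦ ?_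
    have := h.lt
    simp only [mem_Ioo, Fin.lt_def, ← Fin.val_inj, ne_eq] at hp hpi hpj this
    obtain hmn | hmn := le_total m n
    · rw [mem_window_of_le hmn] at hj ⊢
      omega
    · obtain ⟨m, rfl⟩ := Nat.exists_eq_add_of_le' hmn
      rw [mem_window_add (by omega) (by omega)] at hj ⊢
      omega

end Bridge

section BridgeMatrix

open Matrix

variable {k n : ℕ} {i j : Fin n}

theorem minor_updateCol_of_notMem (A : Matrix (Fin k) (Fin n) ℝ) (w : Fin k → ℝ)
    {I : Finset (Fin n)} (hj : j ∉ I) : minor k n (A.updateCol j w) I = minor k n A I := by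
  by_cases h : I.card = k
  · rw [minor_eq_detRowAlternating h, minor_eq_detRowAlternating h]
    congr 1
    ext r s
    have : I.orderEmbOfFin h r ≠ j := ne_of_mem_of_not_mem (I.orderEmbOfFin_mem h r) hj
    simp [this]
  · simp [minor, h]

theorem minor_updateCol_add_smul (A : Matrix (Fin (k + 1)) (Fin n) ℝ) {R : Finset (Fin n)}
    (hR : R.card = k) (hj : j ∉ R) (i : Fin n) (τ : ℝ) :
    minor (k + 1) n (A.updateCol j (A.col j + τ • A.col i)) (insert j R) =
      minor (k + 1) n A (insert j R) + τ *
        (-1) ^ ((R.filter (· < j)).card + (R.filter (· < i)).card) *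
          minor (k + 1) n A (insert i R) := by
  have hcol : (A.updateCol j (A.col j + τ • A.col i)).col ∘ R.orderEmbOfFin hR =
      A.col ∘ R.orderEmbOfFin hR := by
    ext r s
    have : R.orderEmbOfFin hR r ≠ j := ne_of_mem_of_not_mem (R.orderEmbOfFin_mem hR r) hj
    simp [this]
  have hcolj : (A.updateCol j (A.col j + τ • A.col i)).col j = A.col j + τ • A.col i := by
    ext r
    simp
  rw [minor_insert _ hR hj, minor_insert _ hR hj, hcol, hcolj, AlternatingMap.map_vecCons_add,
    AlternatingMap.map_vecCons_smul, smul_eq_mul, mul_add]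
  congr 1
  by_cases hi : i ∈ R
  · obtain ⟨r, hr⟩ : i ∈ Set.range (R.orderEmbOfFin hR) := by simpa using hi
    have hdet : detRowAlternating (vecCons (A.col i) (A.col ∘ R.orderEmbOfFin hR)) = 0 :=
      AlternatingMap.map_eq_zero_of_eq _ _ (i := 0) (j := r.succ) (by simp [hr])
        (Fin.succ_ne_zero r).symm
    simp [hdet, Finset.insert_eq_of_mem hi, minor, hR]
  · rw [minor_insert _ hR hi, pow_add]
    linear_combination (-τ * (-1) ^ (R.filter (· < j)).card *
      detRowAlternating (vecCons (A.col i) (A.col ∘ R.orderEmbOfFin hR))) *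
        (Even.neg_one_pow (even_two_mul (R.filter (· < i)).card) : (-1 : ℝ) ^ _ = 1)

theorem card_filter_lt_eq_of_isBase {M : Matroid (Fin n)} (hij : i < j)
    (hM : ∀ q ∈ Set.Ioo i j, M.IsLoop q ∨ M.IsColoop q) {R : Finset (Fin n)} (hi : i ∉ R)
    (hB : M.IsBase ↑(insert i R)) :
    (R.filter (· < j)).card =
      (R.filter (· < i)).card + (Set.Ioo i j ∩ M.coloops).ncard := by
  classical
  have hcoloop : Set.Ioo i j ∩ M.coloops = ↑(R.filter (· ∈ Set.Ioo i j)) := by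
    ext q
    simp only [Set.mem_inter_iff, Finset.coe_filter, Set.mem_ofPred_eq, and_comm (a := q ∈ R)]
    refine and_congr_right fun hq ↦ ⟨fun h ↦ ?_, fun hqR ↦ ?_⟩
    · simpa [hq.1.ne'] using hB.mem_of_isColoop h
    · exact (hM q hq).resolve_left fun h ↦ h.notMem_of_indep hB.indep (by simp [hqR])
  have hdisj : Disjoint (R.filter (· < i)) (R.filter (· ∈ Set.Ioo i j)) :=
    Finset.disjoint_filter.2 fun q _ hq h ↦ hq.not_gt h.1
  rw [hcoloop, Set.ncard_coe_finset, ← Finset.card_union_of_disjoint hdisj, ← Finset.filter_or]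
  refine congrArg Finset.card (Finset.filter_congr fun q hq ↦ ?_)
  have := ne_of_mem_of_not_mem hq hi
  grind

theorem TotallyNonneg.updateCol_add_smul {A : Matrix (Fin k) (Fin n) ℝ} (hA : TotallyNonneg A)
    (hrank : A.rank = k) (hij : i < j)
    (hfix : ∀ q ∈ Set.Ioo i j, (vectorMatroid ℝ A.col).IsLoop q ∨
      (vectorMatroid ℝ A.col).IsColoop q) :
    TotallyNonneg (A.updateCol j (A.col j +
      (-1 : ℝ) ^ (Set.Ioo i j ∩ (vectorMatroid ℝ A.col).coloops).ncard • A.col i)) := by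
  intro I
  by_cases hj : j ∈ I
  swap
  · exact (minor_updateCol_of_notMem A _ hj).symm ▸ hA I
  by_cases hI : I.card = k
  swap
  · simp [minor, hI]
  obtain ⟨R, hjR, rfl⟩ : ∃ R, j ∉ R ∧ insert j R = I :=
    ⟨I.erase j, I.notMem_erase j, Finset.insert_erase hj⟩
  rw [Finset.card_insert_of_notMem hjR] at hI
  subst hI
  rw [minor_updateCol_add_smul A rfl hjR]
  refine add_nonneg (hA _) ?_
  by_cases hiR : minor (R.card + 1) n A (insert i R) = 0
  · rw [hiR, mul_zero]
  · have hi : i ∉ R := fun hi ↦ hiR (by simp [minor, Finset.insert_eq_of_mem hi])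
    rw [card_filter_lt_eq_of_isBase hij hfix hi ((isBase_vectorMatroid_col_iff hrank).2 hiR),
      ← pow_add, Even.neg_one_pow ⟨(R.filter (· < i)).card + _, by ring⟩, one_mul]
    exact hA _

theorem col_updateCol (A : Matrix (Fin k) (Fin n) ℝ) (w : Fin k → ℝ) :
    (A.updateCol j w).col = Function.update A.col j w := by
  ext p r
  by_cases hp : p = j <;> simp [hp]

theorem rank_updateCol_add_smul (A : Matrix (Fin k) (Fin n) ℝ) (hij : i ≠ j) (τ : ℝ) :
    (A.updateCol j (A.col j + τ • A.col i)).rank = A.rank := by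
  rw [rank_eq_finrank_span_cols, rank_eq_finrank_span_cols, col_updateCol, ← Set.image_univ,
    ← Set.image_univ, span_image_update_add_smul A.col hij τ fun _ ↦ Set.mem_univ i]

end BridgeMatrix

section CoordinateMatrix

open Matrix

variable {k n : ℕ} {C I : Finset (Fin n)} {p : Fin n}

theorem rank_eq_of_minor_ne_zero {A : Matrix (Fin k) (Fin n) ℝ} (h : minor k n A I ≠ 0) :
    A.rank = k := by
  obtain ⟨hcard, hI⟩ := minor_ne_zero_iff.1 h
  have hle := Submodule.finrank_mono
    (Submodule.span_mono (R := ℝ) (Set.image_subset_range A.col I))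
  rw [finrank_span_image_eq_ncard hI, Set.ncard_coe_finset, hcard,
    ← rank_eq_finrank_span_cols] at hle
  exact A.rank_le_height.antisymm hle

/-- The matrix whose columns indexed by `C` are the standard basis vectors, in order, and whose
other columns vanish. -/
def coordinateMatrix (C : Finset (Fin n)) : Matrix (Fin C.card) (Fin n) ℝ :=
  (1 : Matrix (Fin n) (Fin n) ℝ).submatrix (C.orderEmbOfFin rfl) id

theorem coordinateMatrix_col_of_notMem (hp : p ∉ C) : (coordinateMatrix C).col p = 0 := by
  ext r
  exact one_apply_ne (ne_of_mem_of_not_mem (C.orderEmbOfFin_mem rfl r) hp)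

theorem minor_coordinateMatrix :
    minor C.card n (coordinateMatrix C) I = if I = C then 1 else 0 := by
  split_ifs with h
  · subst h
    rw [minor, dif_pos rfl]
    exact (congrArg det (submatrix_one_embedding (I.orderEmbOfFin rfl).toEmbedding)).trans det_one
  · contrapose! h
    obtain ⟨hcard, hI⟩ := minor_ne_zero_iff.1 h
    refine Finset.eq_of_subset_of_card_le (fun p hp ↦ ?_) hcard.ge
    by_contra hpC
    exact hI.ne_zero (Finset.mem_coe.2 hp) (coordinateMatrix_col_of_notMem hpC)

theorem totallyNonneg_coordinateMatrix : TotallyNonneg (coordinateMatrix C) := fun I ↦ by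
  rw [minor_coordinateMatrix]
  positivity

theorem rank_coordinateMatrix : (coordinateMatrix C).rank = C.card :=
  rank_eq_of_minor_ne_zero (I := C) (by simp [minor_coordinateMatrix])

theorem isLoop_vectorMatroid_coordinateMatrix (hp : p ∉ C) :
    (vectorMatroid ℝ (coordinateMatrix C).col).IsLoop p := by
  rw [Matroid.isLoop_iff, ← Matroid.closure_empty, mem_closure_vectorMatroid_iff,
    coordinateMatrix_col_of_notMem hp]
  exact Submodule.zero_mem _

theorem isColoop_vectorMatroid_coordinateMatrix (hp : p ∈ C) :
    (vectorMatroid ℝ (coordinateMatrix C).col).IsColoop p := by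
  refine Matroid.isColoop_iff_forall_mem_isBase.2 fun B hB ↦ ?_
  lift B to Finset (Fin n) using B.toFinite
  rw [isBase_vectorMatroid_col_iff rank_coordinateMatrix, minor_coordinateMatrix] at hB
  simpa [of_not_not fun h ↦ hB (if_neg h)] using hp

end CoordinateMatrix

section Existence

variable {n : ℕ} {f : Fin n → ℕ} {i j p q : Fin n}

theorem IsBridge.isBoundedAffine_comp_swap (h : IsBridge f i j) (hf : IsBoundedAffine f) :
    IsBoundedAffine (f ∘ Equiv.swap i j) where
  le_apply p := by
    obtain ⟨-, -, hi, hj, -, -⟩ := h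
    have := hf.le_apply p
    grind
  apply_le p := by
    obtain ⟨_, hi, -, -, hj, -⟩ := h
    have := hf.apply_le p
    grind
  injective_mod := hf.injective_mod.comp (Equiv.swap i j).injective

theorem IsBridge.sum_mul_comp_swap_lt (h : IsBridge f i j) :
    ∑ p : Fin n, p * (f ∘ Equiv.swap i j) p < ∑ p : Fin n, p * f p := by
  have hij : (i : ℕ) < j := h.lt
  have hf : f i < f j := h.apply_left_lt.trans_le h.le_apply_right
  have hrest : ∑ p ∈ {i, j}ᶜ, (p : ℕ) * (f ∘ Equiv.swap i j) p = ∑ p ∈ {i, j}ᶜ, (p : ℕ) * f p :=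
    Finset.sum_congr rfl fun p hp ↦ by
      simp only [Finset.mem_compl, Finset.mem_insert, Finset.mem_singleton, not_or] at hp
      rw [Function.comp_apply, Equiv.swap_apply_of_ne_of_ne hp.1 hp.2]
  rw [← Finset.sum_add_sum_compl {i, j}, ← Finset.sum_add_sum_compl {i, j} fun p : Fin n ↦ p * f p,
    hrest, Finset.sum_pair h.lt.ne, Finset.sum_pair h.lt.ne]
  simp only [Function.comp_apply, Equiv.swap_apply_left, Equiv.swap_apply_right]
  nlinarith

/-- The positions that are not fixed modulo `n` by a bounded affine `f`. -/
def movedPositions (f : Fin n → ℕ) : Finset (Fin n) :=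
  {p | p < f p ∧ f p < p + n}

theorem mem_movedPositions : p ∈ movedPositions f ↔ p < f p ∧ f p < p + n := by
  simp [movedPositions]

theorem IsBoundedAffine.eq_or_eq_add_of_notMem_movedPositions (hf : IsBoundedAffine f)
    (hp : p ∉ movedPositions f) : f p = p ∨ f p = p + n := by
  have := hf.le_apply p
  have := hf.apply_le p
  rw [mem_movedPositions] at hp
  omega

theorem IsBoundedAffine.mem_movedPositions_of_apply_eq (hf : IsBoundedAffine f)
    (hp : p ∈ movedPositions f) (hq : f p = q ∨ f p = q + n) : q ∈ movedPositions f := by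
  contrapose! hp
  have hfq : f q % n = q := by
    obtain h | h := hf.eq_or_eq_add_of_notMem_movedPositions hp <;>
      simp [h, Nat.mod_eq_of_lt q.isLt]
  have hfp : f p % n = q := by
    obtain h | h := hq <;> simp [h, Nat.mod_eq_of_lt q.isLt]
  exact hf.injective_mod (hfp.trans hfq.symm) ▸ hp

theorem IsBoundedAffine.apply_min'_movedPositions_lt (hf : IsBoundedAffine f)
    (hU : (movedPositions f).Nonempty) : f ((movedPositions f).min' hU) < n := by
  by_contra! hn
  have hmin := mem_movedPositions.1 ((movedPositions f).min'_mem hU)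
  have hlt : f ((movedPositions f).min' hU) - n < n := by omega
  have := (movedPositions f).min'_le ⟨_, hlt⟩
    (hf.mem_movedPositions_of_apply_eq ((movedPositions f).min'_mem hU)
      (Or.inr (by simp only; omega)))
  rw [Fin.le_def] at this
  simp only at this
  omega

theorem IsBoundedAffine.le_apply_max'_movedPositions (hf : IsBoundedAffine f)
    (hU : (movedPositions f).Nonempty) : n ≤ f ((movedPositions f).max' hU) := by
  by_contra! hn
  have hmax := mem_movedPositions.1 ((movedPositions f).max'_mem hU)
  exact hmax.1.not_ge ((movedPositions f).le_max' ⟨_, hn⟩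
    (hf.mem_movedPositions_of_apply_eq ((movedPositions f).max'_mem hU) (Or.inl rfl)))

theorem IsBoundedAffine.exists_isBridge (hf : IsBoundedAffine f)
    (hU : (movedPositions f).Nonempty) : ∃ i j, IsBridge f i j := by
  obtain ⟨j, hj, hjmin⟩ := ((movedPositions f).filter (n ≤ f ·)).exists_min_image id
    ⟨_, Finset.mem_filter.2 ⟨(movedPositions f).max'_mem hU, hf.le_apply_max'_movedPositions hU⟩⟩
  obtain ⟨hjU, hnj⟩ := Finset.mem_filter.1 hj
  have hlt : (movedPositions f).min' hU < j :=
    ((movedPositions f).min'_le j hjU).lt_of_ne fun h ↦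
      (hf.apply_min'_movedPositions_lt hU).not_ge (h ▸ hnj)
  obtain ⟨i, hi, himax⟩ := ((movedPositions f).filter (· < j)).exists_max_image id
    ⟨_, Finset.mem_filter.2 ⟨(movedPositions f).min'_mem hU, hlt⟩⟩
  obtain ⟨hiU, hij⟩ := Finset.mem_filter.1 hi
  have hfi : f i < n := by
    by_contra! hni
    exact (hjmin i (Finset.mem_filter.2 ⟨hiU, hni⟩)).not_gt hij
  have hbetween (q : Fin n) (hq : q ∈ Set.Ioo i j) : q ∉ movedPositions f := fun hqU ↦
    (himax q (Finset.mem_filter.2 ⟨hqU, hq.2⟩)).not_gt hq.1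
  obtain ⟨hi₁, -⟩ := mem_movedPositions.1 hiU
  obtain ⟨-, hj₂⟩ := mem_movedPositions.1 hjU
  refine ⟨i, j, hij, hfi, ?_, hnj, ?_, fun q hq ↦
    hf.eq_or_eq_add_of_notMem_movedPositions (hbetween q hq)⟩
  · by_contra! hlt
    exact hbetween ⟨f i, hfi⟩ ⟨hi₁, hlt⟩ (hf.mem_movedPositions_of_apply_eq hiU (Or.inl rfl))
  · by_contra! hgt
    refine hbetween ⟨f j - n, by omega⟩ ⟨?_, ?_⟩
      (hf.mem_movedPositions_of_apply_eq hjU (Or.inr (by simp only; omega)))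
    all_goals
      rw [Fin.lt_def]
      simp only
      omega

theorem IsBoundedAffine.exists_totallyNonneg (hf : IsBoundedAffine f) :
    ∃ (k : ℕ) (A : Matrix (Fin k) (Fin n) ℝ),
      TotallyNonneg A ∧ A.rank = k ∧ HasType (vectorMatroid ℝ A.col) f := by
  induction hN : ∑ p : Fin n, p * f p using Nat.strong_induction_on generalizing f with
  | _ N ih =>
    obtain hfix | hU := (movedPositions f).eq_empty_or_nonempty
    · refine ⟨_, coordinateMatrix {p | f p = p + n}, totallyNonneg_coordinateMatrix,
        rank_coordinateMatrix, hasType_of_isLoop_or_isColoop fun p ↦ ?_⟩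
      by_cases hp : f p = p + n
      · exact Or.inr ⟨hp, isColoop_vectorMatroid_coordinateMatrix (by simpa using hp)⟩
      · have hp' := hf.eq_or_eq_add_of_notMem_movedPositions (p := p) (by simp [hfix])
        exact Or.inl ⟨hp'.resolve_right hp,
          isLoop_vectorMatroid_coordinateMatrix (by simpa using hp)⟩
    · obtain ⟨i, j, h⟩ := hf.exists_isBridge hU
      obtain ⟨k, A, hA, hrank, hM⟩ :=
        ih _ (hN ▸ h.sum_mul_comp_swap_lt) (h.isBoundedAffine_comp_swap hf) rfl
      refine ⟨k, _, hA.updateCol_add_smul hrank h.lt (h.isLoop_or_isColoop hM rfl), ?_, ?_⟩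
      · rw [rank_updateCol_add_smul A h.lt.ne, hrank]
      · rw [col_updateCol]
        exact h.hasType (pow_ne_zero _ (neg_ne_zero.2 one_ne_zero)) hM

theorem CrossingClosed.exists_totallyNonneg {M : Matroid (Fin n)} (hM : CrossingClosed M)
    (hME : M.E = Set.univ) : ∃ (k : ℕ) (A : Matrix (Fin k) (Fin n) ℝ),
      TotallyNonneg A ∧ A.rank = k ∧ M = vectorMatroid ℝ A.col := by
  obtain ⟨f, hf, hMf⟩ := exists_hasType M
  obtain ⟨k, A, hA, hrank, hAf⟩ := hf.exists_totallyNonneg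
  refine ⟨k, A, hA, hrank, hM.eq_of_eRk_eq (hA.crossingClosed hrank) hME rfl fun F hF ↦ ?_⟩
  obtain ⟨l, m, hlm, hm, rfl⟩ := hF.exists_eq_window
  exact hMf.eRk_window_eq hAf hME rfl hlm hm

end Existence

section BasesOfMatroid

variable {α : Type*} {n k : ℕ} {M : Matroid (Fin n)}

/-- The bases of a matroid on a finite type, as a finset of finsets. -/
noncomputable def bases [Fintype α] (M : Matroid α) : Finset (Finset α) :=
  open Classical in {B | M.IsBase B}

@[simp]
theorem mem_bases [Fintype α] {M : Matroid α} {B : Finset α} : B ∈ bases M ↔ M.IsBase B := by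
  simp [bases]

theorem bases_nonempty [Fintype α] (M : Matroid α) : (bases M).Nonempty := by
  obtain ⟨B, hB⟩ := M.exists_isBase
  lift B to Finset α using B.toFinite
  exact ⟨B, mem_bases.2 hB⟩

theorem ExchangeAxiom.exists_bases_eq {𝓑 : Finset (Finset (Fin n))} (hex : ExchangeAxiom n 𝓑)
    (h0 : 𝓑.Nonempty) : ∃ M : Matroid (Fin n), M.E = Set.univ ∧ bases M = 𝓑 := by
  let IsBase (B : Set (Fin n)) : Prop := ∃ T ∈ 𝓑, (T : Set (Fin n)) = B
  have hexch : Matroid.ExchangeProperty IsBase := by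
    rintro _ _ ⟨B₁, h₁, rfl⟩ ⟨B₂, h₂, rfl⟩ x hx
    obtain ⟨y, hy, h⟩ := hex B₁ h₁ B₂ h₂ x (by simpa using hx)
    exact ⟨y, by simpa using hy, _, h, by simp⟩
  obtain ⟨B, hB⟩ := h0
  refine ⟨Matroid.ofIsBaseOfFinite Set.finite_univ IsBase ⟨_, B, hB, rfl⟩ hexch
    fun _ _ ↦ Set.subset_univ _, rfl, ?_⟩
  ext T
  rw [mem_bases, Matroid.ofIsBaseOfFinite_isBase]
  simp [IsBase]

theorem isPositroid_iff_exists_totallyNonneg {𝓑 : Set (Finset (Fin n))} :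
    IsPositroid n k 𝓑 ↔ ∃ A : Matrix (Fin k) (Fin n) ℝ, A.rank = k ∧ TotallyNonneg A ∧
      ∀ I : Finset (Fin n), I.card = k → (I ∈ 𝓑 ↔ (vectorMatroid ℝ A.col).IsBase I) :=
  exists_congr fun A ↦ and_congr_right fun hA ↦ by
    simp only [isBase_vectorMatroid_col_iff hA, TotallyNonneg]

theorem isPositroid_bases_iff (hE : M.E = Set.univ) (hk : ∀ B ∈ bases M, B.card = k) :
    IsPositroid n k (bases M) ↔ CrossingClosed M := by
  rw [isPositroid_iff_exists_totallyNonneg]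
  constructor
  · rintro ⟨A, hA, hnonneg, hiff⟩
    suffices M = vectorMatroid ℝ A.col from this ▸ hnonneg.crossingClosed hA
    refine Matroid.ext_isBase hE fun B _ ↦ ?_
    lift B to Finset (Fin n) using B.toFinite
    rw [← mem_bases]
    refine ⟨fun hB ↦ (hiff B (hk B hB)).1 hB, fun hB ↦ (hiff B ?_).2 hB⟩
    exact (minor_ne_zero_iff.1 ((isBase_vectorMatroid_col_iff hA).1 hB)).1
  · intro hM
    obtain ⟨l, A, hnonneg, hA, rfl⟩ := hM.exists_totallyNonneg hE
    obtain ⟨B, hB⟩ := bases_nonempty (vectorMatroid ℝ A.col)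
    obtain rfl : l = k := by
      rw [← hk B hB]
      exact (minor_ne_zero_iff.1 ((isBase_vectorMatroid_col_iff hA).1 (mem_bases.1 hB))).1.symm
    exact ⟨A, hA, hnonneg, fun I _ ↦ mem_bases⟩

end BasesOfMatroid

section ConvexHull

theorem finrank_vectorSpan_parallelogram {𝕜 E : Type*} [Field 𝕜] [AddCommGroup E] [Module 𝕜 E]
    {p u v : E} (h : LinearIndependent 𝕜 ![u, v]) :
    Module.finrank 𝕜 (vectorSpan 𝕜 {p, p + u, p + v, p + u + v}) = 2 := by
  have hspan : vectorSpan 𝕜 {p, p + u, p + v, p + u + v} =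
      Submodule.span 𝕜 (Set.range ![u, v]) := by
    rw [vectorSpan_eq_span_vsub_set_right 𝕜 (Set.mem_insert p _)]
    simp only [Set.image_insert_eq, Set.image_singleton, vsub_eq_sub, sub_self, add_sub_cancel_left,
      add_assoc, Submodule.span_insert_zero, Matrix.range_cons, Matrix.range_empty, Set.union_empty,
      Set.singleton_union]
    refine le_antisymm (Submodule.span_le.2 ?_) (Submodule.span_mono (by grind))
    have hu : u ∈ Submodule.span 𝕜 {u, v} := Submodule.subset_span (by simp)
    have hv : v ∈ Submodule.span 𝕜 {u, v} := Submodule.subset_span (by simp)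
    simp [Set.insert_subset_iff, hu, hv, add_mem]
  rw [hspan, finrank_span_eq_card h, Fintype.card_fin]

variable {𝕜 E : Type*} [Field 𝕜] [LinearOrder 𝕜] [IsStrictOrderedRing 𝕜] [AddCommGroup E]
  [Module 𝕜 E]

theorem convexHull_inter_hyperplane {s : Set E} {ℓ : E →ₗ[𝕜] 𝕜} {c : 𝕜}
    (h : ∀ x ∈ s, ℓ x ≤ c) :
    convexHull 𝕜 s ∩ {x | ℓ x = c} = convexHull 𝕜 {x ∈ s | ℓ x = c} := by
  refine Set.Subset.antisymm (fun x hx ↦ ?_) (Set.subset_inter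
    (convexHull_mono (Set.sep_subset _ _))
    (convexHull_min (fun x hx ↦ hx.2) (convex_hyperplane ℓ.isLinear c)))
  suffices convexHull 𝕜 s ⊆ {x | ℓ x ≤ c ∧ (ℓ x = c → x ∈ convexHull 𝕜 {x ∈ s | ℓ x = c})} from
    (this hx.1).2 hx.2
  refine convexHull_min (fun y hy ↦ ⟨h y hy, fun hyc ↦ subset_convexHull 𝕜 _ ⟨hy, hyc⟩⟩) ?_
  rw [convex_iff_forall_pos]
  intro y hy z hz a b ha hb hab
  have hay := mul_le_mul_of_nonneg_left hy.1 ha.le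
  have hbz := mul_le_mul_of_nonneg_left hz.1 hb.le
  have hc : a * c + b * c = c := by rw [← add_mul, hab, one_mul]
  simp only [Set.mem_ofPred_eq, map_add, map_smul, smul_eq_mul]
  refine ⟨by linarith, fun heq ↦ convex_convexHull 𝕜 _ (hy.2 ?_) (hz.2 ?_) ha.le hb.le hab⟩
  · exact mul_left_cancel₀ ha.ne' (by linarith)
  · exact mul_left_cancel₀ hb.ne' (by linarith)

end ConvexHull

section Polytope

variable {n : ℕ} {𝓑 𝓒 : Finset (Finset (Fin n))} {w : Fin n → ℝ} {F : Set (Fin n → ℝ)}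

theorem sum_mul_ind (w : Fin n → ℝ) (T : Finset (Fin n)) :
    ∑ i, w i * ind n T i = ∑ i ∈ T, w i := by
  simp [ind]

theorem ind_injective : Function.Injective (ind n) := fun S T h ↦ by
  ext i
  have := congrFun h i
  simp only [ind] at this
  split_ifs at this <;> simp_all

theorem ind_mem_extremePoints_cube (T : Finset (Fin n)) :
    ind n T ∈ (Set.univ.pi fun _ ↦ Set.Icc (0 : ℝ) 1).extremePoints ℝ := by
  rw [extremePoints_pi]
  intro i _
  rw [Set.extremePoints_Icc zero_le_one]
  simp [ind, em']

theorem ind_mem_polytopeOf_iff {T : Finset (Fin n)} : ind n T ∈ polytopeOf n 𝓑 ↔ T ∈ 𝓑 := by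
  refine ⟨fun h ↦ ?_, fun h ↦ subset_convexHull ℝ _ ⟨T, h, rfl⟩⟩
  have hcube : polytopeOf n 𝓑 ⊆ Set.univ.pi fun _ ↦ Set.Icc (0 : ℝ) 1 :=
    convexHull_min (Set.image_subset_iff.2 fun B _ ↦ (ind_mem_extremePoints_cube B).1)
      (convex_pi fun _ _ ↦ convex_Icc 0 1)
  obtain ⟨B, hB, heq⟩ := extremePoints_convexHull_subset
    (inter_extremePoints_subset_extremePoints_of_subset hcube ⟨h, ind_mem_extremePoints_cube T⟩)
  exact ind_injective heq ▸ hB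

theorem polytopeOf_injective : Function.Injective (polytopeOf n) := fun 𝓑 𝓒 h ↦ by
  ext T
  rw [← ind_mem_polytopeOf_iff, h, ind_mem_polytopeOf_iff]

/-- The members of a family of sets that have the largest weight in it. They index the vertices of
the face of `polytopeOf n 𝓑` on which the linear functional with coefficients `w` is maximal. -/
noncomputable def maximizers (𝓑 : Finset (Finset (Fin n))) (w : Fin n → ℝ) :
    Finset (Finset (Fin n)) :=
  {B ∈ 𝓑 | ∀ B' ∈ 𝓑, ∑ i ∈ B', w i ≤ ∑ i ∈ B, w i}

theorem mem_maximizers {B : Finset (Fin n)} :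
    B ∈ maximizers 𝓑 w ↔ B ∈ 𝓑 ∧ ∀ B' ∈ 𝓑, ∑ i ∈ B', w i ≤ ∑ i ∈ B, w i :=
  Finset.mem_filter

theorem maximizers_nonempty (h0 : 𝓑.Nonempty) (w : Fin n → ℝ) : (maximizers 𝓑 w).Nonempty := by
  obtain ⟨B, hB, hmax⟩ := 𝓑.exists_max_image (fun B ↦ ∑ i ∈ B, w i) h0
  exact ⟨B, mem_maximizers.2 ⟨hB, hmax⟩⟩

theorem maximizers_eq_of_forall_iff {c : ℝ} (hle : ∀ B ∈ 𝓑, ∑ i ∈ B, w i ≤ c) (h0 : 𝓒.Nonempty)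
    (h𝓒 : ∀ B, B ∈ 𝓒 ↔ B ∈ 𝓑 ∧ ∑ i ∈ B, w i = c) : maximizers 𝓑 w = 𝓒 := by
  obtain ⟨B₀, hB₀⟩ := h0
  obtain ⟨h₀, rfl⟩ := (h𝓒 B₀).1 hB₀
  ext B
  rw [mem_maximizers, h𝓒]
  exact and_congr_right fun hB ↦ ⟨fun h ↦ (hle B hB).antisymm (h B₀ h₀),
    fun h B' hB' ↦ h ▸ hle B' hB'⟩

theorem polytopeOf_maximizers (h0 : 𝓑.Nonempty) (w : Fin n → ℝ) :
    polytopeOf n (maximizers 𝓑 w) = {x ∈ polytopeOf n 𝓑 |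
      ∀ y ∈ polytopeOf n 𝓑, ∑ i, w i * y i ≤ ∑ i, w i * x i} := by
  obtain ⟨B₀, hB₀⟩ := maximizers_nonempty h0 w
  obtain ⟨h₀, hmax⟩ := mem_maximizers.1 hB₀
  let ℓ : (Fin n → ℝ) →ₗ[ℝ] ℝ := dotProductBilin ℝ ℝ w
  have hℓ (B : Finset (Fin n)) : ℓ (ind n B) = ∑ i ∈ B, w i := sum_mul_ind w B
  have hvert : ∀ x ∈ ind n '' 𝓑, ℓ x ≤ ℓ (ind n B₀) := by
    rintro _ ⟨B, hB, rfl⟩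
    simpa only [hℓ] using hmax B hB
  have hle : ∀ x ∈ polytopeOf n 𝓑, ℓ x ≤ ℓ (ind n B₀) :=
    convexHull_min hvert (convex_halfSpace_le ℓ.isLinear _)
  have himage : ind n '' maximizers 𝓑 w = {x ∈ ind n '' 𝓑 | ℓ x = ℓ (ind n B₀)} := by
    ext x
    constructor
    · rintro ⟨B, hB, rfl⟩
      obtain ⟨hB, hmaxB⟩ := mem_maximizers.1 hB
      exact ⟨⟨B, hB, rfl⟩, by simpa only [hℓ] using (hmax B hB).antisymm (hmaxB B₀ h₀)⟩
    · rintro ⟨⟨B, hB, rfl⟩, heq⟩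
      rw [hℓ, hℓ] at heq
      exact ⟨B, mem_maximizers.2 ⟨hB, heq ▸ hmax⟩, rfl⟩
  rw [polytopeOf, himage, ← convexHull_inter_hyperplane hvert]
  ext x
  exact and_congr_right fun hx ↦ ⟨fun heq y hy ↦ (hle y hy).trans_eq heq.symm,
    fun h ↦ (hle x hx).antisymm (h _ (ind_mem_polytopeOf_iff.2 h₀))⟩

theorem isFaceOf_polytopeOf_iff (h0 : 𝓑.Nonempty) :
    IsFaceOf n (polytopeOf n 𝓑) F ↔ ∃ w, F = polytopeOf n (maximizers 𝓑 w) := by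
  simp only [IsFaceOf, polytopeOf_maximizers h0]

end Polytope

section Crossing

variable {α : Type*} [DecidableEq α] {n k : ℕ} {M : Matroid (Fin n)} {w : Fin n → ℝ}

theorem exchangeAxiom_maximizers_bases (M : Matroid (Fin n)) (w : Fin n → ℝ) :
    ExchangeAxiom n (maximizers (bases M) w) := by
  intro B₁ h₁ B₂ h₂ x hx
  simp only [mem_maximizers, mem_bases] at h₁ h₂
  obtain ⟨y, hy, hy₁, hy₂⟩ := exists_symm_exchange h₁.1 h₂.1 (x := x) (by simpa using hx)
  rw [Finset.mem_sdiff] at hx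
  have hy' : y ∈ B₂ ∧ y ∉ B₁ := by simpa using hy
  have hsum {B : Finset (Fin n)} {u v : Fin n} (hu : u ∈ B) (hv : v ∉ B) :
      ∑ i ∈ insert v (B.erase u), w i = ∑ i ∈ B, w i + w v - w u := by
    rw [Finset.sum_insert (by simp [hv]), Finset.sum_erase_eq_sub hu]
    ring
  refine ⟨y, by simpa using hy', mem_maximizers.2 ⟨by simpa using hy₁, fun B hB ↦ ?_⟩⟩
  have h₂' := h₂.2 (insert x (B₂.erase y)) (by simpa using hy₂)
  rw [hsum hy'.1 hx.2] at h₂'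
  rw [hsum hx.1 hy'.2]
  linarith [h₁.2 B (by simpa using hB)]

theorem CrossingClosed.of_bases_eq_maximizers {N : Matroid (Fin n)} (hM : CrossingClosed M)
    (hN : bases N = maximizers (bases M) w) : CrossingClosed N := by
  intro S a b c d hab hbc hcd ha hb hc hd hSab hSad hSbc hScd
  lift S to Finset (Fin n) using S.toFinite
  simp only [Finset.mem_coe, ← Finset.coe_insert, ← mem_bases, hN, mem_maximizers] at *
  obtain ⟨hSac, hSbd⟩ : insert a (insert c S) ∈ bases M ∧ insert b (insert d S) ∈ bases M := by
    simpa using hM hab hbc hcd (S := S) (by simpa) (by simpa) (by simpa) (by simpa)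
      (by simpa using hSab.1) (by simpa using hSad.1) (by simpa using hSbc.1)
      (by simpa using hScd.1)
  have hsum {x y : Fin n} (hx : x ∉ S) (hy : y ∉ S) (hxy : x < y) :
      ∑ i ∈ insert x (insert y S), w i = w x + w y + ∑ i ∈ S, w i := by
    rw [Finset.sum_insert (by simp [hx, hxy.ne]), Finset.sum_insert hy, add_assoc]
  have hbalance : ∑ i ∈ insert a (insert c S), w i + ∑ i ∈ insert b (insert d S), w i =
      ∑ i ∈ insert a (insert b S), w i + ∑ i ∈ insert c (insert d S), w i := by
    rw [hsum ha hc (hab.trans hbc), hsum hb hd (hbc.trans hcd), hsum ha hb hab, hsum hc hd hcd]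
    ring
  refine ⟨⟨hSac, fun B hB ↦ (hSab.2 B hB).trans ?_⟩, ⟨hSbd, fun B hB ↦ (hSab.2 B hB).trans ?_⟩⟩
  · linarith [hScd.2 _ hSbd]
  · linarith [hScd.2 _ hSac]

theorem isPositroid_maximizers_bases (hE : M.E = Set.univ) (hk : ∀ B ∈ bases M, B.card = k)
    (hM : IsPositroid n k (bases M)) (w : Fin n → ℝ) :
    IsPositroid n k (maximizers (bases M) w) := by
  obtain ⟨N, hNE, hN⟩ := (exchangeAxiom_maximizers_bases M w).exists_bases_eq
    (maximizers_nonempty (bases_nonempty M) w)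
  rw [← hN, isPositroid_bases_iff hNE fun B hB ↦ hk B (mem_maximizers.1 (hN ▸ hB)).1]
  exact ((isPositroid_bases_iff hE hk).1 hM).of_bases_eq_maximizers hN

/-- The family `{Sab, Sad, Sbc, Scd}`, indexing the vertices of the square faces that obstruct
being a positroid polytope. -/
def crossing (a b c d : α) (S : Finset α) : Finset (Finset α) :=
  {insert a (insert b S), insert a (insert d S), insert b (insert c S), insert c (insert d S)}

theorem mem_crossing {a b c d : α} {S T : Finset α} : T ∈ crossing a b c d S ↔
    T = insert a (insert b S) ∨ T = insert a (insert d S) ∨ T = insert b (insert c S) ∨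
      T = insert c (insert d S) := by
  simp [crossing]

theorem mem_crossing_iff_exists {a b c d : α} {S T : Finset α} : T ∈ crossing a b c d S ↔
    ∃ x y, (x = a ∨ x = c) ∧ (y = b ∨ y = d) ∧ T = insert x (insert y S) := by
  rw [mem_crossing, Finset.insert_comm b c]
  aesop

theorem insert_insert_notMem_crossing {a b c d : α} {S : Finset α} (hab : a ≠ b) (hac : a ≠ c)
    (had : a ≠ d) (hbc : b ≠ c) (hcd : c ≠ d) (ha : a ∉ S) (hc : c ∉ S) :
    insert a (insert c S) ∉ crossing a b c d S := by
  rw [mem_crossing]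
  suffices ∀ T, insert a (insert c S) = T → a ∈ T ∧ c ∈ T by
    rintro (h | h | h | h) <;> have := this _ h <;> grind
  rintro _ rfl
  simp

theorem mem_crossing_iff_card_inter {a b c d : α} {S B : Finset α} (ha : a ∉ S) (hc : c ∉ S)
    (hb : b ∉ insert a (insert c S)) (hd : d ∉ insert a (insert c S)) (hB : B.card = S.card + 2) :
    B ∈ crossing a b c d S ↔ B ⊆ insert b (insert d (insert a (insert c S))) ∧
      (B ∩ insert a (insert c S)).card = S.card + 1 ∧ S ⊆ B := by
  rw [mem_crossing_iff_exists]
  constructor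
  · rintro ⟨x, y, hx, hy, rfl⟩
    have hinter : insert x (insert y S) ∩ insert a (insert c S) = insert x S := by grind
    rw [hinter, Finset.card_insert_of_notMem (by grind)]
    grind
  · rintro ⟨hBU, hcard, hSB⟩
    obtain ⟨x, hxS, hx⟩ := Finset.exists_eq_insert_iff.2
      ⟨Finset.subset_inter hSB (show S ⊆ insert a (insert c S) by grind), hcard.symm⟩
    obtain ⟨y, hyV, hy⟩ := Finset.exists_eq_insert_iff.2
      ⟨Finset.inter_subset_left (s₁ := B) (s₂ := insert a (insert c S)), by omega⟩
    refine ⟨x, y, ?_, ?_, ?_⟩ <;> grind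

theorem exists_maximizers_eq_crossing {𝓑 : Finset (Finset (Fin n))} {a b c d : Fin n}
    {S : Finset (Fin n)} (hk : ∀ B ∈ 𝓑, B.card = S.card + 2) (hac : a ≠ c) (ha : a ∉ S)
    (hc : c ∉ S) (hb : b ∉ insert a (insert c S)) (hd : d ∉ insert a (insert c S))
    (hsub : crossing a b c d S ⊆ 𝓑) (hSac : insert a (insert c S) ∉ 𝓑) :
    ∃ w, maximizers 𝓑 w = crossing a b c d S := by
  set V := insert a (insert c S) with hV
  set U := insert b (insert d V) with hU
  have hVcard : V.card = S.card + 2 := by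
    rw [Finset.card_insert_of_notMem (by simp [hac, ha]), Finset.card_insert_of_notMem hc]
  have hsum (B : Finset (Fin n)) : ∑ i ∈ B, (ind n U + ind n V + ind n S) i =
      ((B ∩ U).card + (B ∩ V).card + (B ∩ S).card : ℕ) := by
    simp [ind, Finset.sum_add_distrib]
  have hleU {B : Finset (Fin n)} (hB : B ∈ 𝓑) : (B ∩ U).card ≤ S.card + 2 :=
    (Finset.card_le_card Finset.inter_subset_left).trans_eq (hk B hB)
  have hleV {B : Finset (Fin n)} (hB : B ∈ 𝓑) : (B ∩ V).card < S.card + 2 := by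
    rw [← hVcard]
    refine Finset.card_lt_card (Finset.inter_subset_right.ssubset_of_ne fun h ↦ hSac ?_)
    rwa [← Finset.eq_of_subset_of_card_le (Finset.inter_eq_right.1 h) (by rw [hk B hB, hVcard])]
      at hB
  have hleS (B : Finset (Fin n)) : (B ∩ S).card ≤ S.card :=
    Finset.card_le_card Finset.inter_subset_right
  -- The three indicators contribute at most `k`, `k - 1` and `k - 2` to the weight of a base.
  refine ⟨ind n U + ind n V + ind n S, maximizers_eq_of_forall_iff
    (c := (S.card + 2 + (S.card + 1) + S.card : ℕ)) (fun B hB ↦ ?_)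
    ⟨_, mem_crossing.2 (Or.inl rfl)⟩ fun B ↦ ?_⟩
  · rw [hsum, Nat.cast_le]
    have := hleU hB
    have := hleV hB
    have := hleS B
    omega
  · rw [← and_iff_right_of_imp (@hsub B)]
    refine and_congr_right fun hB ↦ ?_
    have h₁ := hleU hB
    have h₂ := hleV hB
    have h₃ := hleS B
    rw [mem_crossing_iff_card_inter ha hc hb hd (hk B hB), ← hV, ← hU, hsum, Nat.cast_inj,
      ← Finset.inter_eq_left, ← Finset.inter_eq_right (s := S)]
    refine ⟨fun ⟨hBU, hBV, hBS⟩ ↦ by rw [hBU, hBV, hBS, hk B hB], fun h ↦ ⟨?_, by omega, ?_⟩⟩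
    · exact Finset.eq_of_subset_of_card_le Finset.inter_subset_left (by rw [hk B hB]; omega)
    · exact Finset.eq_of_subset_of_card_le Finset.inter_subset_right (by omega)

theorem crossing_rotate (a b c d : α) (S : Finset α) : crossing b c d a S = crossing a b c d S := by
  ext T
  rw [mem_crossing, mem_crossing, Finset.insert_comm b a, Finset.insert_comm d a]
  tauto

theorem polytopeOf_crossing (a b c d : Fin n) (S : Finset (Fin n)) :
    polytopeOf n (crossing a b c d S) =
      convexHull ℝ {ind n (insert a (insert b S)), ind n (insert a (insert d S)),
        ind n (insert b (insert c S)), ind n (insert c (insert d S))} := by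
  simp [polytopeOf, crossing, Set.image_insert_eq]

theorem ind_insert {a : Fin n} {S : Finset (Fin n)} (ha : a ∉ S) :
    ind n (insert a S) = ind n S + Pi.single a 1 := by
  ext i
  obtain rfl | hi := eq_or_ne i a <;> simp [ind, *]

theorem finrank_direction_polytopeOf_crossing {a b c d : Fin n} {S : Finset (Fin n)}
    (hab : a < b) (hbc : b < c) (hcd : c < d) (ha : a ∉ S) (hb : b ∉ S) (hc : c ∉ S)
    (hd : d ∉ S) :
    Module.finrank ℝ (affineSpan ℝ (polytopeOf n (crossing a b c d S))).direction = 2 := by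
  let e (i : Fin n) : Fin n → ℝ := Pi.single i 1
  have hind {x y : Fin n} (hx : x ∉ S) (hy : y ∉ S) (hxy : x < y) :
      ind n (insert x (insert y S)) = ind n S + e y + e x := by
    rw [ind_insert (by simp [hx, hxy.ne]), ind_insert hy]
  have hlin : LinearIndependent ℝ ![e d - e b, e c - e a] := by
    rw [LinearIndependent.pair_iff]
    intro s t h
    have hcd' := And.intro (congrFun h d) (congrFun h c)
    simpa [e, Pi.single_apply, hab.ne', hbc.ne', hcd.ne, hcd.ne', (hab.trans hbc).ne',
      (hbc.trans hcd).ne', (hab.trans (hbc.trans hcd)).ne'] using hcd'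
  have hSad : ind n (insert a (insert d S)) = ind n (insert a (insert b S)) + (e d - e b) := by
    rw [hind ha hd (hab.trans (hbc.trans hcd)), hind ha hb hab]
    abel
  have hSbc : ind n (insert b (insert c S)) = ind n (insert a (insert b S)) + (e c - e a) := by
    rw [hind hb hc hbc, hind ha hb hab]
    abel
  have hScd : ind n (insert c (insert d S)) =
      ind n (insert a (insert b S)) + (e d - e b) + (e c - e a) := by
    rw [hind hc hd hcd, hind ha hb hab]
    abel
  rw [polytopeOf_crossing, affineSpan_convexHull, direction_affineSpan, hSad, hSbc, hScd]
  exact finrank_vectorSpan_parallelogram hlin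

theorem not_isPositroid_crossing {a b c d : Fin n} {S : Finset (Fin n)} (hab : a < b) (hbc : b < c)
    (hcd : c < d) (ha : a ∉ S) (hb : b ∉ S) (hc : c ∉ S) (hd : d ∉ S) (hk : S.card + 2 = k) :
    ¬ IsPositroid n k (crossing a b c d S) := by
  rw [isPositroid_iff_exists_totallyNonneg]
  rintro ⟨A, hA, hnonneg, hiff⟩
  have hac := hab.trans hbc
  have hcard {x y : Fin n} (hx : x ∉ S) (hy : y ∉ S) (hxy : x < y) :
      (insert x (insert y S)).card = k := by
    rw [Finset.card_insert_of_notMem (by simp [hx, hxy.ne]), Finset.card_insert_of_notMem hy, ← hk]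
  have hbase {x y : Fin n} (hx : x ∉ S) (hy : y ∉ S) (hxy : x < y)
      (h : insert x (insert y S) ∈ crossing a b c d S) :
      (vectorMatroid ℝ A.col).IsBase (insert x (insert y (S : Set (Fin n)))) := by
    simpa using (hiff _ (hcard hx hy hxy)).1 h
  have hSac : insert a (insert c S) ∈ crossing a b c d S := by
    refine (hiff _ (hcard ha hc hac)).2 ?_
    simpa using (hnonneg.crossingClosed hA hab hbc hcd ha hb hc hd
      (hbase ha hb hab (by simp [crossing])) (hbase ha hd (hac.trans hcd) (by simp [crossing]))
      (hbase hb hc hbc (by simp [crossing])) (hbase hc hd hcd (by simp [crossing]))).1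
  exact insert_insert_notMem_crossing hab.ne hac.ne (hac.trans hcd).ne hbc.ne hcd.ne ha hc hSac

end Crossing

theorem exists_isFaceOf_crossing {n k : ℕ} {M : Matroid (Fin n)} (hE : M.E = Set.univ)
    (hk : ∀ B ∈ bases M, B.card = k) (hM : ¬ IsPositroid n k (bases M)) :
    ∃ a b c d : Fin n, a < b ∧ b < c ∧ c < d ∧ ∃ S : Finset (Fin n), S.card + 2 = k ∧
      a ∉ S ∧ b ∉ S ∧ c ∉ S ∧ d ∉ S ∧
        IsFaceOf n (polytopeOf n (bases M)) (polytopeOf n (crossing a b c d S)) := by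
  rw [isPositroid_bases_iff hE hk, CrossingClosed] at hM
  push Not at hM
  obtain ⟨S, a, b, c, d, hab, hbc, hcd, ha, hb, hc, hd, hSab, hSad, hSbc, hScd, hM⟩ := hM
  lift S to Finset (Fin n) using S.toFinite
  simp only [Finset.mem_coe, ← Finset.coe_insert, ← mem_bases] at *
  have hS : S.card + 2 = k := by
    rw [← hk _ hSab, Finset.card_insert_of_notMem (by simp [ha, hab.ne]),
      Finset.card_insert_of_notMem hb]
  have hsub : crossing a b c d S ⊆ bases M := by
    simp [crossing, Finset.insert_subset_iff, *]
  refine ⟨a, b, c, d, hab, hbc, hcd, S, hS, ha, hb, hc, hd, ?_⟩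
  suffices ∃ w, maximizers (bases M) w = crossing a b c d S by
    obtain ⟨w, hw⟩ := this
    exact (isFaceOf_polytopeOf_iff (bases_nonempty M)).2 ⟨w, by rw [hw]⟩
  by_cases hSac : insert a (insert c S) ∈ bases M
  · rw [← crossing_rotate] at hsub ⊢
    refine exists_maximizers_eq_crossing (by simpa only [hS]) (hbc.trans hcd).ne hb hd ?_ ?_ hsub
      (hM hSac) <;> grind
  · refine exists_maximizers_eq_crossing (by simpa only [hS]) (hab.trans hbc).ne ha hc ?_ ?_ hsub
      hSac <;> grind

/-- **Characterization of positroid polytopes.** A matroid `M` of rank `k` on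
`[n]` is a positroid iff every two-dimensional face of its matroid polytope
`Γ_M` is a positroid polytope.  Moreover, if `M` is not a positroid, then `Γ_M`
has a two-dimensional face with vertex set
`{e_{Sab}, e_{Sad}, e_{Sbc}, e_{Scd}}` for some `a < b < c < d` and a
`(k−2)`-set `S` disjoint from `{a,b,c,d}`. -/
theorem positroid_two_dim_face_characterization (n k : ℕ)
    (𝓑 : Finset (Finset (Fin n))) (h0 : 𝓑.Nonempty) (hk : ∀ B ∈ 𝓑, B.card = k)
    (hex : ExchangeAxiom n 𝓑) :
    (IsPositroid n k ↑𝓑 ↔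
      ∀ F : Set (Fin n → ℝ), IsFaceOf n (polytopeOf n 𝓑) F →
        Module.finrank ℝ (affineSpan ℝ F).direction = 2 →
        ∃ 𝓑' : Finset (Finset (Fin n)), IsPositroid n k ↑𝓑' ∧ F = polytopeOf n 𝓑') ∧
    (¬ IsPositroid n k ↑𝓑 →
      ∃ a b c d : Fin n, a < b ∧ b < c ∧ c < d ∧
        ∃ S : Finset (Fin n), S.card + 2 = k ∧
          a ∉ S ∧ b ∉ S ∧ c ∉ S ∧ d ∉ S ∧
          IsFaceOf n (polytopeOf n 𝓑)
            (convexHull ℝ {ind n (insert a (insert b S)), ind n (insert a (insert d S)),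
              ind n (insert b (insert c S)), ind n (insert c (insert d S))}) ∧
          Module.finrank ℝ (affineSpan ℝ
            (convexHull ℝ {ind n (insert a (insert b S)), ind n (insert a (insert d S)),
              ind n (insert b (insert c S)), ind n (insert c (insert d S))} :
                Set (Fin n → ℝ))).direction = 2) := by
  obtain ⟨M, hE, rfl⟩ := hex.exists_bases_eq h0
  refine ⟨⟨fun hM F hF _ ↦ ?_, fun hfaces ↦ ?_⟩, fun hM ↦ ?_⟩
  · obtain ⟨w, rfl⟩ := (isFaceOf_polytopeOf_iff h0).1 hF
    exact ⟨_, isPositroid_maximizers_bases hE hk hM w, rfl⟩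
  · by_contra hM
    obtain ⟨a, b, c, d, hab, hbc, hcd, S, hS, ha, hb, hc, hd, hface⟩ :=
      exists_isFaceOf_crossing hE hk hM
    obtain ⟨𝓑', h𝓑', heq⟩ := hfaces _ hface
      (finrank_direction_polytopeOf_crossing hab hbc hcd ha hb hc hd)
    rw [← polytopeOf_injective heq] at h𝓑'
    exact not_isPositroid_crossing hab hbc hcd ha hb hc hd hS h𝓑'
  · obtain ⟨a, b, c, d, hab, hbc, hcd, S, hS, ha, hb, hc, hd, hface⟩ :=
      exists_isFaceOf_crossing hE hk hM
    refine ⟨a, b, c, d, hab, hbc, hcd, S, hS, ha, hb, hc, hd, ?_⟩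
    rw [← polytopeOf_crossing]
    exact ⟨hface, finrank_direction_polytopeOf_crossing hab hbc hcd ha hb hc hd⟩
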